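/- arXiv:2005.11674 — 2 statements merged into one kernel-verified Lean document; each statement's English description precedes it below -/
import Mathlib

section
/- Let q run through all prime powers with q ≡ 1 (mod 4). Then σ(q)/q² converges to 953·2⁻¹⁵; that is, for every real ε > 0 there exists N such that for every prime power q with q ≡ 1 (mod 4) and q > N one has |σ(q)/q² − 953/2¹⁵| < ε. -/
open scoped Classical

noncomputable section

/-- The operation of the quasigroup `Q_{a,b}`:
`u*v = u + a(v-u)` if `v-u` is a square, `u*v = u + b(v-u)` otherwise. -/
def qop {F : Type*} [Field F] (a b u v : F) : F :=
  if IsSquare (v - u) then u + a * (v - u) else u + b * (v - u)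

/-- The set `Σ(F)` of pairs `(a,b)` with `a ≠ b`, `a,b ∉ {0,1}`, and
`ab` and `(1-a)(1-b)` both squares. -/
def SigSet (F : Type*) [Field F] : Set (F × F) :=
  {p | p.1 ≠ p.2 ∧ p.1 ≠ 0 ∧ p.1 ≠ 1 ∧ p.2 ≠ 0 ∧ p.2 ≠ 1 ∧
    IsSquare (p.1 * p.2) ∧ IsSquare ((1 - p.1) * (1 - p.2))}

/-- `Q_{a,b}` is maximally nonassociative. -/
def MaxNA {F : Type*} [Field F] (a b : F) : Prop :=
  ∀ u v w : F, qop a b (qop a b u v) w = qop a b u (qop a b v w) → u = v ∧ v = w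

/-- `σ(q)`: the number of pairs `(a,b) ∈ Σ` for which `Q_{a,b}` is
maximally nonassociative. -/
def sigmaCount (F : Type*) [Field F] : ℕ :=
  Set.ncard {p : F × F | p ∈ SigSet F ∧ MaxNA p.1 p.2}

/-!
Write `χ` for the quadratic character of `F`. The maps `x ↦ s * x + c` with `s` a nonzero square are
automorphisms of `Q_{a,b}`, and with `s` a nonsquare they are isomorphisms to `Q_{b,a}`, so maximal
nonassociativity only concerns the equation `(0 * 1) * w = 0 * (1 * w)` in `Q_{a,b}` and `Q_{b,a}`.
It is linear in `w` as soon as the classes of three differences are fixed, and when `-1` is a square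
the consistency of that choice depends only on the values of `χ` at sixteen polynomials in `a` and
`b`. Of the `2 ^ 16` sign patterns exactly `1906 = 2 * 953` belong to maximally nonassociative
`Q_{a,b}` with `(a, b) ∈ Σ`. For all but boundedly many `a` the sixteen polynomials are, as
polynomials in `b`, separable and pairwise coprime, so the character sums of their nonconstant
products are `O(√q)` for each such `a`. Hence every pattern occurs
`q ^ 2 / 2 ^ 16 + O(q ^ (3 / 2))` times.

The bound on character sums is proved by Stepanov's method. For `f` squarefree, a nonzero polynomial
`∑ (rⱼ + f ^ ((q - 1) / 2) * sⱼ) * X ^ (q * j)` with `rⱼ`, `sⱼ` of small degree is chosen by linear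
algebra so that it vanishes to order about `√q` wherever `χ (f x)` has a given value `1` or `-1`.
Comparison with its degree bounds the number of such `x`.
-/

section Stepanov

open Polynomial

theorem pow_sub_dvd_hasseDeriv_of_pow_dvd {R : Type*} [CommRing R] {f p : R[X]} {n : ℕ} (k : ℕ)
    (h : f ^ n ∣ p) : f ^ (n - k) ∣ hasseDeriv k p := by
  induction n generalizing p k with
  | zero => simp
  | succ n ih =>
    obtain ⟨g, rfl⟩ := h
    rw [pow_succ', mul_assoc, hasseDeriv_mul]
    refine Finset.dvd_sum fun ⟨i, j⟩ hij => ?_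
    rw [Finset.HasAntidiagonal.mem_antidiagonal] at hij
    have hj : f ^ (n - j) ∣ hasseDeriv j (f ^ n * g) := ih j (dvd_mul_right _ _)
    rcases Nat.eq_zero_or_pos i with rfl | hi
    · rw [hasseDeriv_zero']
      refine (pow_dvd_pow f (by omega : n + 1 - k ≤ n - j + 1)).trans ?_
      rw [pow_succ']
      exact mul_dvd_mul_left f hj
    · exact ((pow_dvd_pow f (by omega)).trans hj).mul_left _

theorem pow_dvd_of_hasseDeriv_eval_eq_zero {R : Type*} [CommRing R] {p : R[X]} {x : R} {n : ℕ}
    (h : ∀ k < n, (hasseDeriv k p).eval x = 0) : (X - C x) ^ n ∣ p := by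
  rw [X_sub_C_pow_dvd_iff, ← taylor_apply, X_pow_dvd_iff]
  intro k hk
  rw [taylor_coeff, h k hk]

theorem exists_linearMap_eq_mul_of_forall_dvd {k M R : Type*} [CommRing k] [AddCommGroup M]
    [Module k M] [CommRing R] [IsDomain R] [Algebra k R] (T : M →ₗ[k] R) {g : R} (hg : g ≠ 0)
    (h : ∀ x, g ∣ T x) : ∃ A : M →ₗ[k] R, ∀ x, T x = g * A x := by
  choose A hA using h
  refine ⟨{ toFun := A, map_add' := fun x y => ?_, map_smul' := fun c x => ?_ }, hA⟩
  · exact mul_left_cancel₀ hg (by rw [← hA, map_add, hA, hA, mul_add])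
  · exact mul_left_cancel₀ hg (by rw [← hA, map_smul, hA, RingHom.id_apply, mul_smul_comm])

theorem exists_linearMap_pow_mul_hasseDeriv_pow_mul {R : Type*} [CommRing R] [IsDomain R]
    {f : R[X]} (hf : f ≠ 0) (c k : ℕ) : ∃ A : R[X] →ₗ[R] R[X],
      (∀ s, f ^ k * hasseDeriv k (f ^ c * s) = f ^ c * A s) ∧
      ∀ s, (A s).natDegree ≤ s.natDegree + k * f.natDegree := by
  let T : R[X] →ₗ[R] R[X] :=
    LinearMap.mulLeft R (f ^ k) ∘ₗ hasseDeriv k ∘ₗ LinearMap.mulLeft R (f ^ c)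
  have hdvd (s : R[X]) : f ^ c ∣ T s := by
    refine (pow_dvd_pow f (by omega : c ≤ k + (c - k))).trans ?_
    rw [pow_add]
    exact mul_dvd_mul_left _ (pow_sub_dvd_hasseDeriv_of_pow_dvd k (dvd_mul_right _ _))
  obtain ⟨A, hA⟩ := exists_linearMap_eq_mul_of_forall_dvd T (pow_ne_zero c hf) hdvd
  refine ⟨A, hA, fun s => ?_⟩
  by_cases hs : A s = 0
  · simp [hs]
  have hlower : (T s).natDegree = c * f.natDegree + (A s).natDegree := by
    rw [hA, natDegree_mul (pow_ne_zero c hf) hs, natDegree_pow]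
  have hinner : (f ^ c * s).natDegree ≤ c * f.natDegree + s.natDegree :=
    natDegree_mul_le.trans (add_le_add_left natDegree_pow_le _)
  have hupper : (T s).natDegree ≤ k * f.natDegree + (f ^ c * s).natDegree :=
    natDegree_mul_le.trans <| add_le_add natDegree_pow_le <|
      (natDegree_hasseDeriv_le _ k).trans (Nat.sub_le _ _)
  omega

theorem eq_zero_of_sq_mul_eq_mul_sq {R : Type*} [CommRing R] [IsDomain R]
    [UniqueFactorizationMonoid R] {f r s u : R} (hf : Squarefree f) (hfu : ¬IsUnit f)
    (hu : IsUnit u) (h : r ^ 2 * f = u * s ^ 2) : r = 0 ∧ s = 0 := by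
  have hf0 : f ≠ 0 := hf.ne_zero
  by_cases hr : r = 0
  · subst hr
    simpa [hu.ne_zero] using h.symm
  have hs : s ≠ 0 := by
    rintro rfl
    simp [hr, hf0] at h
  exfalso
  obtain ⟨p, hp, hpf⟩ := WfDvdMonoid.exists_irreducible_factor hfu hf0
  have hprime : Prime p := hp.prime
  have hmult : emultiplicity p f = 1 := by
    refine le_antisymm ?_ (by simpa using le_emultiplicity_of_pow_dvd (k := 1) (by simpa using hpf))
    exact ((squarefree_iff_emultiplicity_le_one f).1 hf p).resolve_right hp.not_isUnit
  have hval := congrArg (emultiplicity p) h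
  rw [emultiplicity_mul hprime, emultiplicity_mul hprime, emultiplicity_pow hprime,
    emultiplicity_pow hprime, hmult, emultiplicity_of_isUnit_right hp.not_isUnit hu,
    (FiniteMultiplicity.of_prime_left hprime hr).emultiplicity_eq_multiplicity,
    (FiniteMultiplicity.of_prime_left hprime hs).emultiplicity_eq_multiplicity] at hval
  norm_cast at hval
  omega

/-- The auxiliary polynomial of Stepanov's method. The square root of `f` is represented by
`f ^ c` with `c = (q - 1) / 2`, and the polynomial is used both at `Y = X ^ q`, where it has few
zeros, and at a constant `Y`, where its derivatives are easy to control. -/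
def stepanovPoly {R : Type*} [CommRing R] {J : ℕ} (f : R) (c : ℕ) (r s : Fin J → R) (Y : R) : R :=
  ∑ j, (r j + f ^ c * s j) * Y ^ (j : ℕ)

theorem sub_dvd_stepanovPoly_sub {R : Type*} [CommRing R] {J : ℕ} (f : R) (c : ℕ)
    (r s : Fin J → R) (Y Z : R) : Y - Z ∣ stepanovPoly f c r s Y - stepanovPoly f c r s Z := by
  simp only [stepanovPoly, ← Finset.sum_sub_distrib, ← mul_sub]
  exact Finset.dvd_sum fun j _ => (sub_dvd_pow_sub_pow _ _ _).mul_left _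

theorem natDegree_stepanovPoly_le {R : Type*} [CommRing R] {J D c d q : ℕ} {f : R[X]}
    {r s : Fin (J + 1) → R[X]} (hf : f.natDegree ≤ d) (hr : ∀ j, (r j).natDegree ≤ D)
    (hs : ∀ j, (s j).natDegree ≤ D) :
    (stepanovPoly f c r s (X ^ q)).natDegree ≤ D + c * d + q * J := by
  refine natDegree_sum_le_of_forall_le _ _ fun j _ => ?_
  rw [← pow_mul]
  refine natDegree_mul_le.trans (add_le_add (natDegree_add_le_of_degree_le ?_ ?_) ?_)
  · exact (hr j).trans (Nat.le_add_right _ _)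
  · rw [add_comm]
    exact natDegree_mul_le_of_le (natDegree_pow_le_of_le c hf) (hs j)
  · exact (natDegree_X_pow_le _).trans (Nat.mul_le_mul_left q (Nat.lt_succ_iff.1 j.is_lt))

theorem dvd_term_of_stepanovPoly_eq_zero {R : Type*} [CommRing R] [IsDomain R] {J : ℕ} {f Y : R}
    {c : ℕ} {r s : Fin J → R} (hY : Y ≠ 0) (h : stepanovPoly f c r s Y = 0) {j : Fin J}
    (hlt : ∀ i < j, r i = 0 ∧ s i = 0) : Y ∣ r j + f ^ c * s j := by
  have hterm : Y ^ (j + 1 : ℕ) ∣ (r j + f ^ c * s j) * Y ^ (j : ℕ) := by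
    rw [stepanovPoly, ← Finset.add_sum_erase _ _ (Finset.mem_univ j)] at h
    rw [eq_neg_of_add_eq_zero_left h]
    refine (Finset.dvd_sum fun i hi => ?_).neg_right
    rcases lt_trichotomy i j with hij | rfl | hij
    · simp [hlt i hij]
    · simp at hi
    · exact (pow_dvd_pow Y (Nat.succ_le_of_lt hij)).mul_left _
  rw [pow_succ', mul_dvd_mul_iff_right (pow_ne_zero _ hY)] at hterm
  exact hterm

variable {F : Type*} [Field F] [Fintype F]

local notation "q" => Fintype.card F

theorem X_sub_C_pow_card (x : F) : (X - C x : F[X]) ^ q = X ^ q - C x := by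
  rw [← FiniteField.expand_card]
  simp

theorem X_pow_card_dvd_pow_card_sub (f : F[X]) : (X : F[X]) ^ q ∣ f ^ q - C (f.eval 0) := by
  have hX : (X : F[X]) ∣ f - C (f.eval 0) := by
    simpa using X_sub_C_dvd_sub_C_eval (p := f) (a := 0)
  simpa only [map_sub, expand_C, expand_X, FiniteField.expand_card] using
    _root_.map_dvd (expand F q) hX

-- Multiplying by the conjugate `(r - f ^ c * s) * f` replaces `f ^ q` by `f.eval 0` modulo `X ^ q`.
theorem eq_zero_of_X_pow_card_dvd {f r s : F[X]} {c D : ℕ} (hc : q = 2 * c + 1)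
    (hf : Squarefree f) (hd : 0 < f.natDegree) (h0 : f.eval 0 ≠ 0)
    (hr : r.natDegree ≤ D) (hs : s.natDegree ≤ D) (hD : 2 * D + f.natDegree < q)
    (h : X ^ q ∣ r + f ^ c * s) : r = 0 ∧ s = 0 := by
  have hdvd : X ^ q ∣ r ^ 2 * f - C (f.eval 0) * s ^ 2 := by
    have hsplit : r ^ 2 * f - C (f.eval 0) * s ^ 2 =
        (r + f ^ c * s) * ((r - f ^ c * s) * f) + (f ^ q - C (f.eval 0)) * s ^ 2 := by
      rw [hc]
      ring
    rw [hsplit]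
    exact dvd_add (h.mul_right _) ((X_pow_card_dvd_pow_card_sub f).mul_right _)
  have hdeg : (r ^ 2 * f - C (f.eval 0) * s ^ 2).natDegree < (X ^ q : F[X]).natDegree := by
    rw [natDegree_X_pow]
    refine (natDegree_sub_le _ _).trans_lt (max_lt (lt_of_le_of_lt ?_ hD) (lt_of_le_of_lt ?_ hD))
    · exact natDegree_mul_le_of_le (natDegree_pow_le_of_le 2 hr) le_rfl
    · exact (natDegree_C_mul_le _ _).trans
        ((natDegree_pow_le_of_le 2 hs).trans (Nat.le_add_right _ _))
  have heq : r ^ 2 * f = C (f.eval 0) * s ^ 2 :=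
    sub_eq_zero.1 (eq_zero_of_dvd_of_natDegree_lt hdvd hdeg)
  exact eq_zero_of_sq_mul_eq_mul_sq hf (fun hu => hd.ne' (natDegree_eq_zero_of_isUnit hu))
    (isUnit_C.2 h0.isUnit) heq

theorem stepanovPoly_ne_zero {J : ℕ} {f : F[X]} {r s : Fin J → F[X]} {c D : ℕ}
    (hc : q = 2 * c + 1) (hf : Squarefree f) (hd : 0 < f.natDegree) (h0 : f.eval 0 ≠ 0)
    (hr : ∀ j, (r j).natDegree ≤ D) (hs : ∀ j, (s j).natDegree ≤ D)
    (hD : 2 * D + f.natDegree < q) (hrs : (r, s) ≠ 0) :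
    stepanovPoly f c r s (X ^ q) ≠ 0 := by
  intro h
  have hzero (j : Fin J) : r j = 0 ∧ s j = 0 := by
    induction j using WellFoundedLT.induction with
    | ind j ih =>
      exact eq_zero_of_X_pow_card_dvd hc hf hd h0 (hr j) (hs j) hD
        (dvd_term_of_stepanovPoly_eq_zero (pow_ne_zero _ X_ne_zero) h ih)
  exact hrs (Prod.ext (funext fun j => (hzero j).1) (funext fun j => (hzero j).2))

theorem X_sub_C_pow_dvd_stepanovPoly {J c l : ℕ} {f : F[X]} {r s : Fin J → F[X]} {x a : F}
    {A : ℕ → F[X] →ₗ[F] F[X]} (hA : ∀ k t, f ^ k * hasseDeriv k (f ^ c * t) = f ^ c * A k t)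
    (hE : ∀ k < l, ∑ j, (f ^ k * hasseDeriv k (r j) + a • A k (s j)) * X ^ (j : ℕ) = 0)
    (hl : l ≤ q) (hx : f.eval x ≠ 0) (hxa : f.eval x ^ c = a) :
    (X - C x) ^ l ∣ stepanovPoly f c r s (X ^ q) := by
  have hred : (X - C x) ^ l ∣ stepanovPoly f c r s (X ^ q) - stepanovPoly f c r s (C x) := by
    refine (pow_dvd_pow _ hl).trans ?_
    rw [X_sub_C_pow_card]
    exact sub_dvd_stepanovPoly_sub f c r s _ _
  rw [dvd_iff_dvd_of_dvd_sub hred]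
  refine pow_dvd_of_hasseDeriv_eval_eq_zero fun k hk => ?_
  have hterm (j : Fin J) : f ^ k * hasseDeriv k ((r j + f ^ c * s j) * C x ^ (j : ℕ)) =
      (f ^ k * hasseDeriv k (r j) + f ^ c * A k (s j)) * C x ^ (j : ℕ) := by
    rw [← C_pow, mul_comm _ (C _), ← smul_eq_C_mul, map_smul, map_add, mul_smul_comm, mul_add, hA,
      smul_eq_C_mul, mul_comm]
  have hmul : f.eval x ^ k * (hasseDeriv k (stepanovPoly f c r s (C x))).eval x = 0 := by
    have hEx := congrArg (eval x) (hE k hk)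
    rw [← eval_pow, ← eval_mul, stepanovPoly, map_sum, Finset.mul_sum,
      Finset.sum_congr rfl fun j _ => hterm j]
    simpa [eval_finsetSum, hxa] using hEx
  exact (mul_eq_zero.1 hmul).resolve_left (pow_ne_zero k hx)

theorem finrank_degreeLT {K : Type*} [Field K] (n : ℕ) :
    Module.finrank K (degreeLT K n) = n :=
  (degreeLTEquiv K n).finrank_eq.trans (Module.finrank_fin_fun K)

theorem exists_stepanov_coefficients {K : Type*} [Field K] {J D d l : ℕ} {f : K[X]} (a : K)
    {A : ℕ → K[X] →ₗ[K] K[X]} (hA : ∀ k t, (A k t).natDegree ≤ t.natDegree + k * d)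
    (hf : f.natDegree ≤ d) (hlt : l * (D + J + l * d) < 2 * J * (D + 1)) :
    ∃ r s : Fin J → K[X], (r, s) ≠ 0 ∧ (∀ j, (r j).natDegree ≤ D) ∧ (∀ j, (s j).natDegree ≤ D) ∧
      ∀ k < l, ∑ j, (f ^ k * hasseDeriv k (r j) + a • A k (s j)) * X ^ (j : ℕ) = 0 := by
  let V := degreeLT K (D + 1)
  have hV (t : V) : (t : K[X]).natDegree ≤ D :=
    natDegree_le_of_degree_le (Order.lt_succ_iff.1 (mem_degreeLT.1 t.2))
  let Ψ (k : ℕ) : (Fin J → V) × (Fin J → V) →ₗ[K] K[X] := ∑ j : Fin J,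
    LinearMap.mulRight K (X ^ (j : ℕ)) ∘ₗ LinearMap.coprod
      (LinearMap.mulLeft K (f ^ k) ∘ₗ hasseDeriv k ∘ₗ V.subtype ∘ₗ LinearMap.proj j)
      (a • A k ∘ₗ V.subtype ∘ₗ LinearMap.proj j)
  have hΨ (k : ℕ) (v) : Ψ k v = ∑ j : Fin J,
      (f ^ k * hasseDeriv k (v.1 j : K[X]) + a • A k (v.2 j)) * X ^ (j : ℕ) := by
    simp [Ψ]
  have hdeg (k : Fin l) (v) : Ψ k v ∈ degreeLT K (D + J + l * d) := by
    rw [hΨ]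
    refine Submodule.sum_mem _ fun j _ =>
      mem_degreeLT.2 (degree_le_natDegree.trans_lt (Nat.cast_lt.2 ?_))
    have hk : k * d ≤ l * d := Nat.mul_le_mul_right d k.is_lt.le
    refine (natDegree_mul_le_of_le (m := D + k * d) (natDegree_add_le_of_degree_le ?_ ?_)
      (natDegree_X_pow_le _)).trans_lt (by omega)
    · rw [add_comm]
      refine natDegree_mul_le_of_le (natDegree_pow_le_of_le _ hf) ?_
      exact (natDegree_hasseDeriv_le _ _).trans ((Nat.sub_le _ _).trans (hV _))
    · exact (natDegree_smul_le _ _).trans ((hA _ _).trans (Nat.add_le_add_right (hV _) _))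
  let Φ : (Fin J → V) × (Fin J → V) →ₗ[K] Fin l → degreeLT K (D + J + l * d) :=
    LinearMap.pi fun k => (Ψ k).codRestrict _ (hdeg k)
  have hker : LinearMap.ker Φ ≠ ⊥ := by
    refine LinearMap.ker_ne_bot_of_finrank_lt ?_
    simp only [Module.finrank_prod, Module.finrank_pi_fintype, V, finrank_degreeLT,
      Finset.sum_const, Finset.card_univ, Fintype.card_fin, smul_eq_mul]
    linarith
  obtain ⟨v, hv, hv0⟩ := Submodule.exists_mem_ne_zero_of_ne_bot hker
  refine ⟨fun j => v.1 j, fun j => v.2 j, fun h => hv0 ?_, fun j => hV _, fun j => hV _,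
    fun k hk => ?_⟩
  · rw [Prod.mk_eq_zero] at h
    exact Prod.ext (funext fun j => Subtype.ext (congrFun h.1 j))
      (funext fun j => Subtype.ext (congrFun h.2 j))
  · rw [← hΨ]
    exact congrArg Subtype.val (congrFun (LinearMap.mem_ker.1 hv) ⟨k, hk⟩)

theorem card_mul_le_natDegree_of_forall_pow_dvd {K : Type*} [Field K] {p : K[X]} (hp : p ≠ 0)
    {S : Finset K} {l : ℕ} (h : ∀ x ∈ S, (X - C x) ^ l ∣ p) : S.card * l ≤ p.natDegree := by
  have hdvd : ∏ x ∈ S, (X - C x) ^ l ∣ p :=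
    Finset.prod_dvd_of_coprime (fun x _ y _ hxy =>
      (pairwise_coprime_X_sub_C Function.injective_id hxy).pow) h
  have hdeg : (∏ x ∈ S, (X - C x) ^ l).natDegree = S.card * l := by
    rw [natDegree_prod_of_monic _ _ fun x _ => (monic_X_sub_C x).pow l]
    simp
  exact hdeg ▸ natDegree_le_of_dvd hdvd hp

theorem two_mul_mul_card_pow_eq_le {f : F[X]} {c D h : ℕ} (hc : q = 2 * c + 1)
    (hf : Squarefree f) (hd : 0 < f.natDegree) (h0 : f.eval 0 ≠ 0) {a : F} (ha : a ≠ 0)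
    (hDq : 2 * D + f.natDegree < q) (hh : 2 * h ≤ q) (hhD : h * h * (2 * f.natDegree + 1) ≤ D) :
    2 * h * (Finset.univ.filter fun x => f.eval x ^ c = a).card ≤
      D + c * f.natDegree + q * h := by
  choose A hA hAdeg using
    exists_linearMap_pow_mul_hasseDeriv_pow_mul hf.ne_zero c
  obtain ⟨r, s, hrs, hr, hs, hE⟩ :=
    exists_stepanov_coefficients (J := h + 1) (D := D) (l := 2 * h) a hAdeg le_rfl
      (by nlinarith)
  have hc0 : c ≠ 0 := by omega
  have hcard := card_mul_le_natDegree_of_forall_pow_dvd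
    (stepanovPoly_ne_zero hc hf hd h0 hr hs hDq hrs)
    (S := Finset.univ.filter fun x => f.eval x ^ c = a) (l := 2 * h) fun x hx => by
      have hxa : f.eval x ^ c = a := by simpa using hx
      have hx0 : f.eval x ≠ 0 := fun h0 => ha (by rw [← hxa, h0, zero_pow hc0])
      exact X_sub_C_pow_dvd_stepanovPoly hA hE hh hx0 hxa
  rw [mul_comm]
  exact hcard.trans (natDegree_stepanovPoly_le le_rfl hr hs)

theorem card_add_mul_sum_quadraticChar_le {f : F[X]} (hF : ringChar F ≠ 2) (hf : f ≠ 0) {ε : ℤ}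
    (hε : ε = 1 ∨ ε = -1) :
    q + ε * ∑ x, quadraticChar F (f.eval x) ≤
      2 * (Finset.univ.filter fun x => f.eval x ^ (q / 2) = (ε : F)).card + f.natDegree := by
  have hpoint (y : F) : 1 + ε * quadraticChar F y ≤
      2 * (if y ^ (q / 2) = (ε : F) then 1 else 0) + if y = 0 then 1 else 0 := by
    rw [← quadraticChar_eq_pow_of_char_ne_two' hF y]
    rcases eq_or_ne y 0 with rfl | hy
    · rw [MulChar.map_zero, if_pos rfl]
      split_ifs <;> norm_num
    rcases quadraticChar_dichotomy hy with h | h <;> rcases hε with rfl | rfl <;>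
      simp only [h, hy, if_false] <;> split_ifs <;> simp_all
  have hroots : (Finset.univ.filter fun x => f.eval x = 0).card ≤ f.natDegree :=
    card_le_degree_of_subset_roots fun x hx => by simpa [hf] using hx
  have hsum := Finset.sum_le_sum fun x (_ : x ∈ Finset.univ) => hpoint (f.eval x)
  simp only [Finset.sum_add_distrib, ← Finset.mul_sum, Finset.sum_boole, Finset.sum_const,
    Finset.card_univ, nsmul_eq_mul, mul_one] at hsum
  linarith [(Nat.cast_le (α := ℤ)).2 hroots]

theorem two_mul_mul_abs_sum_quadraticChar_le_of_eval_zero_ne_zero {f : F[X]} (hF : ringChar F ≠ 2)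
    (hf : Squarefree f) (hd : 0 < f.natDegree) (h0 : f.eval 0 ≠ 0) {h : ℕ} (hh : 0 < h)
    (hq : 8 * f.natDegree * h ^ 2 ≤ q) :
    2 * h * |∑ x, quadraticChar F (f.eval x)| ≤ q + q * f.natDegree + 2 * h * f.natDegree := by
  set d := f.natDegree with hd_def
  have hc : q = 2 * (q / 2) + 1 := by
    have := FiniteField.odd_card_of_char_ne_two hF
    omega
  have hone : 1 ≤ h ^ 2 := Nat.one_le_pow _ _ hh
  have hle : h ≤ h ^ 2 := Nat.le_self_pow two_ne_zero h
  have hsmall : 2 * (h * h * (2 * d + 1)) + d + 1 ≤ q := by nlinarith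
  have hbound {ε : ℤ} (hε : ε = 1 ∨ ε = -1) :
      2 * h * (ε * ∑ x, quadraticChar F (f.eval x)) ≤ q + q * d + 2 * h * d := by
    have hε0 : (ε : F) ≠ 0 := by rcases hε with rfl | rfl <;> simp
    have hcard := two_mul_mul_card_pow_eq_le (D := (q - d - 1) / 2) (h := h) hc hf hd h0 hε0
      (by omega) (by nlinarith) (by change h * h * (2 * d + 1) ≤ _; omega)
    have hsum := card_add_mul_sum_quadraticChar_le hF hf.ne_zero hε
    have hD : 2 * ((q - d - 1) / 2) ≤ q := by omega
    rw [← hd_def] at hcard hsum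
    zify at hcard hD hc
    nlinarith
  rcases abs_choice (∑ x, quadraticChar F (f.eval x)) with habs | habs <;> rw [habs]
  · simpa using hbound (Or.inl rfl)
  · simpa using hbound (Or.inr rfl)

theorem squarefree_taylor {R : Type*} [CommRing R] {f : R[X]} (hf : Squarefree f) (r : R) :
    Squarefree (taylor r f) := by
  intro x hx
  have h := _root_.map_dvd (taylorEquiv r).symm hx
  rw [map_mul, show (taylorEquiv r).symm (taylor r f) = f from
    (taylorEquiv r).symm_apply_apply f] at h
  exact (MulEquiv.isUnit_map _).1 (hf _ h)

theorem two_mul_mul_abs_sum_quadraticChar_le {f : F[X]} (hF : ringChar F ≠ 2) (hf : Squarefree f)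
    (hd : 0 < f.natDegree) {h : ℕ} (hh : 0 < h) (hq : 8 * f.natDegree * h ^ 2 ≤ q) :
    2 * h * |∑ x, quadraticChar F (f.eval x)| ≤ q + q * f.natDegree + 2 * h * f.natDegree := by
  have hdq : f.natDegree < q := by
    have := Nat.one_le_pow 2 _ hh
    nlinarith
  obtain ⟨y, hy⟩ := exists_eval_ne_zero_of_natDegree_lt_card f hf.ne_zero
    (by simpa [Cardinal.mk_fintype] using hdq)
  have hshift : ∑ x, quadraticChar F (f.eval x) = ∑ x, quadraticChar F ((taylor y f).eval x) := by
    simp only [taylor_eval]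
    exact (Equiv.sum_comp (Equiv.addRight y) fun x => quadraticChar F (f.eval x)).symm
  rw [hshift, ← natDegree_taylor f y]
  apply two_mul_mul_abs_sum_quadraticChar_le_of_eval_zero_ne_zero hF (squarefree_taylor hf y)
  · rwa [natDegree_taylor]
  · simpa [taylor_eval] using hy
  · exact hh
  · rwa [natDegree_taylor]

theorem abs_sum_quadraticChar_le {f : F[X]} (hF : ringChar F ≠ 2) (hf : Squarefree f)
    (hd : 0 < f.natDegree) :
    |∑ x, (quadraticChar F (f.eval x) : ℝ)| ≤ 8 * f.natDegree ^ 2 * √q := by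
  set d := f.natDegree
  have hd1 : (1 : ℝ) ≤ d := Nat.one_le_cast.2 hd
  have hsq : √(q : ℝ) ^ 2 = q := Real.sq_sqrt (Nat.cast_nonneg _)
  have hy1 : 1 ≤ √(q : ℝ) := Real.one_le_sqrt.2 (Nat.one_le_cast.2 Fintype.card_pos)
  set y := √(q : ℝ)
  rcases lt_or_ge q (8 * d) with hsmall | hlarge
  · have htriv : |∑ x, (quadraticChar F (f.eval x) : ℝ)| ≤ q := by
      refine (Finset.abs_sum_le_sum_abs _ _).trans ?_
      refine (Finset.sum_le_card_nsmul _ _ 1 fun x _ => ?_).trans (by simp)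
      rcases quadraticChar_isQuadratic F (f.eval x) with h | h | h <;> simp [h]
    have hyd : y ≤ 8 * d := by
      have : (q : ℝ) ≤ 8 * d := by exact_mod_cast hsmall.le
      nlinarith
    calc _ ≤ y * y := by rwa [← sq, hsq]
      _ ≤ 8 * d * y := by gcongr
      _ ≤ 8 * d ^ 2 * y := by gcongr; nlinarith
  · set h := Nat.sqrt (q / (8 * d))
    have hh : 0 < h := Nat.sqrt_pos.2 (Nat.div_pos hlarge (by positivity))
    have hle : 8 * d * h ^ 2 ≤ q := by
      rw [mul_comm]
      exact (Nat.le_div_iff_mul_le (by positivity)).1 (Nat.sqrt_le' _)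
    have hlt : q < (h + 1) ^ 2 * (8 * d) :=
      (Nat.div_lt_iff_lt_mul (by positivity)).1 (Nat.lt_succ_sqrt' _)
    have hyh : y ≤ 6 * d * h := by
      have hh1 : (1 : ℝ) ≤ h := Nat.one_le_cast.2 hh
      have hq : y ^ 2 ≤ (h + 1) ^ 2 * (8 * d) := by
        rw [hsq]
        exact_mod_cast hlt.le
      refine (sq_le_sq₀ (by positivity) (by positivity)).1 ?_
      calc y ^ 2 ≤ (h + 1) ^ 2 * (8 * d) := hq
        _ ≤ (2 * h) ^ 2 * (9 * (d * d)) := by gcongr <;> nlinarith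
        _ = (6 * d * h) ^ 2 := by ring
    have hmain : 2 * h * |∑ x, (quadraticChar F (f.eval x) : ℝ)| ≤
        y ^ 2 + y ^ 2 * d + 2 * h * d := by
      rw [hsq]
      exact_mod_cast two_mul_mul_abs_sum_quadraticChar_le hF hf hd hh hle
    refine le_of_mul_le_mul_left (hmain.trans ?_) (by positivity : (0 : ℝ) < 2 * h)
    have hyd : d ≤ d ^ 2 * y := by nlinarith
    calc y ^ 2 + y ^ 2 * d + 2 * h * d
      _ ≤ 2 * d * (y * y) + 2 * h * d := by nlinarith [sq_nonneg y]
      _ ≤ 2 * d * (y * (6 * d * h)) + 2 * h * (d ^ 2 * y) := by gcongr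
      _ ≤ 2 * h * (8 * d ^ 2 * y) := by
        have : 0 ≤ d ^ 2 * h * y := by positivity
        linarith

end Stepanov

section SignPatterns

variable {X ι : Type*} [Fintype X] [Fintype ι] {χ : ι → X → ℝ} {δ : ℝ}

/-- The sign, `1` or `-1`, encoded by a Boolean. -/
def boolSign (t : Bool) : ℝ := if t then 1 else -1

theorem boolSign_injective : Function.Injective boolSign := by
  rintro (_ | _) (_ | _) h <;> first | rfl | norm_num [boolSign] at h

theorem abs_boolSign (t : Bool) : |boolSign t| = 1 := by
  cases t <;> simp [boolSign]

theorem abs_ite_forall_eq_sub_prod_le (t : ι → Bool) {y : ι → ℝ}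
    (hy : ∀ i, y i = 0 ∨ y i = 1 ∨ y i = -1) :
    |(if ∀ i, y i = boolSign (t i) then 1 else 0) - ∏ i, (1 + boolSign (t i) * y i) / 2| ≤
      if ∃ i, y i = 0 then 1 else 0 := by
  have hfactor (i : ι) : 0 ≤ (1 + boolSign (t i) * y i) / 2 ∧
      (1 + boolSign (t i) * y i) / 2 ≤ 1 := by
    rcases hy i with h | h | h <;> cases t i <;> norm_num [boolSign, h]
  by_cases h0 : ∃ i, y i = 0
  · obtain ⟨i, hi⟩ := h0
    have hne : ¬∀ i, y i = boolSign (t i) := fun h => by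
      have := abs_boolSign (t i)
      rw [← h i, hi] at this
      norm_num at this
    rw [if_neg hne, if_pos ⟨i, hi⟩, zero_sub, abs_neg, abs_of_nonneg]
    · exact Finset.prod_le_one (fun i _ => (hfactor i).1) fun i _ => (hfactor i).2
    · exact Finset.prod_nonneg fun i _ => (hfactor i).1
  · have hterm (i : ι) :
        (1 + boolSign (t i) * y i) / 2 = if y i = boolSign (t i) then 1 else 0 := by
      rcases hy i with h | h | h
      · exact absurd ⟨i, h⟩ h0
      all_goals cases t i <;> norm_num [boolSign, h]
    simp only [hterm, Finset.prod_ite_zero, Finset.prod_const_one, Finset.mem_univ, true_implies]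
    simp [h0]

variable [Nonempty ι]

theorem abs_sum_prod_sub_card_le (t : ι → Bool)
    (hδ : ∀ S : Finset ι, S.Nonempty → |∑ x, ∏ i ∈ S, χ i x| ≤ δ) :
    |∑ x, ∏ i, (1 + boolSign (t i) * χ i x) / 2 - Fintype.card X / 2 ^ Fintype.card ι| ≤ δ := by
  have hδ0 : 0 ≤ δ := (abs_nonneg _).trans (hδ _ Finset.univ_nonempty)
  have hexpand : ∑ x, ∏ i, (1 + boolSign (t i) * χ i x) / 2 - Fintype.card X / 2 ^ Fintype.card ι =
      (∑ S ∈ Finset.univ.powerset.erase ∅, (∏ i ∈ S, boolSign (t i)) * ∑ x, ∏ i ∈ S, χ i x) /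
        2 ^ Fintype.card ι := by
    simp only [Finset.prod_div_distrib, Finset.prod_one_add, Finset.prod_const, Finset.card_univ,
      ← Finset.sum_div, ← sub_div]
    rw [Finset.sum_comm, ← Finset.add_sum_erase _ _ (Finset.empty_mem_powerset _)]
    simp [Finset.prod_mul_distrib, Finset.mul_sum]
  have hterm (S : Finset ι) (hS : S ∈ Finset.univ.powerset.erase ∅) :
      |(∏ i ∈ S, boolSign (t i)) * ∑ x, ∏ i ∈ S, χ i x| ≤ δ := by
    rw [abs_mul, Finset.abs_prod]
    simpa [abs_boolSign] using
      hδ S (Finset.nonempty_iff_ne_empty.2 (Finset.ne_of_mem_erase hS))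
  rw [hexpand, abs_div, abs_of_pos (by positivity : (0 : ℝ) < 2 ^ Fintype.card ι),
    div_le_iff₀ (by positivity)]
  calc _ ≤ _ := Finset.abs_sum_le_sum_abs _ _
    _ ≤ (Finset.univ.powerset.erase (∅ : Finset ι)).card • δ := Finset.sum_le_card_nsmul _ _ _ hterm
    _ ≤ (2 ^ Fintype.card ι) • δ := by
      refine nsmul_le_nsmul_left hδ0 ((Finset.card_erase_le).trans ?_)
      rw [Finset.card_powerset, Finset.card_univ]
    _ = δ * 2 ^ Fintype.card ι := by simp [mul_comm]

theorem abs_card_forall_eq_sub_le (t : ι → Bool) {Z : ℝ}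
    (hχ : ∀ i x, χ i x = 0 ∨ χ i x = 1 ∨ χ i x = -1)
    (hδ : ∀ S : Finset ι, S.Nonempty → |∑ x, ∏ i ∈ S, χ i x| ≤ δ)
    (hZ : (Finset.univ.filter fun x => ∃ i, χ i x = 0).card ≤ Z) :
    |((Finset.univ.filter fun x => ∀ i, χ i x = boolSign (t i)).card : ℝ) -
      Fintype.card X / 2 ^ Fintype.card ι| ≤ δ + Z := by
  have hind : |((Finset.univ.filter fun x => ∀ i, χ i x = boolSign (t i)).card : ℝ) -
      ∑ x, ∏ i, (1 + boolSign (t i) * χ i x) / 2| ≤ Z := by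
    refine le_trans ?_ hZ
    rw [← Finset.sum_boole, ← Finset.sum_boole, ← Finset.sum_sub_distrib]
    exact (Finset.abs_sum_le_sum_abs _ _).trans
      (Finset.sum_le_sum fun x _ => abs_ite_forall_eq_sub_prod_le t fun i => hχ i x)
  have hmain := abs_sum_prod_sub_card_le t hδ
  rw [add_comm]
  exact (abs_sub_le _ _ _).trans (add_le_add hind hmain)

theorem abs_ncard_exists_mem_sub_le (G : Finset (ι → Bool)) {Z : ℝ}
    (hχ : ∀ i x, χ i x = 0 ∨ χ i x = 1 ∨ χ i x = -1)
    (hδ : ∀ S : Finset ι, S.Nonempty → |∑ x, ∏ i ∈ S, χ i x| ≤ δ)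
    (hZ : (Finset.univ.filter fun x => ∃ i, χ i x = 0).card ≤ Z) :
    |({x | ∃ t ∈ G, ∀ i, χ i x = boolSign (t i)}.ncard : ℝ) -
      G.card / 2 ^ Fintype.card ι * Fintype.card X| ≤ G.card * (δ + Z) := by
  have hunion : {x | ∃ t ∈ G, ∀ i, χ i x = boolSign (t i)} =
      ↑(G.biUnion fun t => Finset.univ.filter fun x => ∀ i, χ i x = boolSign (t i)) := by
    ext x
    simp
  have hdisj : (G : Set (ι → Bool)).PairwiseDisjoint fun t =>
      Finset.univ.filter fun x => ∀ i, χ i x = boolSign (t i) := by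
    intro t _ t' _ htt'
    refine Finset.disjoint_filter.2 fun x _ h h' => htt' (funext fun i => ?_)
    exact boolSign_injective ((h i).symm.trans (h' i))
  rw [hunion, Set.ncard_coe_finset, Finset.card_biUnion hdisj]
  have hsplit : (G.card : ℝ) / 2 ^ Fintype.card ι * Fintype.card X =
      ∑ _t ∈ G, (Fintype.card X : ℝ) / 2 ^ Fintype.card ι := by
    rw [Finset.sum_const, nsmul_eq_mul]
    ring
  rw [hsplit, Nat.cast_sum, ← Finset.sum_sub_distrib, ← nsmul_eq_mul]
  exact (Finset.abs_sum_le_sum_abs _ _).trans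
    (Finset.sum_le_card_nsmul _ _ _ fun t _ => abs_card_forall_eq_sub_le t hχ hδ hZ)

end SignPatterns

section Forms

/-- The eight expressions in `a` and `b` whose quadratic characters, together with those of the
expressions obtained by exchanging `a` and `b`, decide whether `Q_{a,b}` is maximally
nonassociative. -/
def form {R : Type*} [CommRing R] (a b : R) : Fin 8 → R :=
  ![a, 1 - a, b - 2 * a + a ^ 2, b * (1 - a + a ^ 2) - a, b * (1 - a + a ^ 2) - a ^ 2, a ^ 2 - b,
    a * b + a - b, 1 - 2 * b + a * b]

/-- The sixteen expressions `form a b` and `form b a`. -/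
def forms {R : Type*} [CommRing R] (a b : R) : Fin 8 ⊕ Fin 8 → R :=
  Sum.elim (form a b) (form b a)

theorem forms_swap {R : Type*} [CommRing R] (a b : R) (j : Fin 8 ⊕ Fin 8) :
    forms a b j.swap = forms b a j := by
  cases j <;> rfl

/-- The coefficients of `forms a b` as polynomials in `b`, constant term first. -/
def formCoeff {R : Type*} [CommRing R] (a : R) : Fin 8 ⊕ Fin 8 → Fin 3 → R :=
  Sum.elim
    ![![a, 0, 0], ![1 - a, 0, 0], ![a ^ 2 - 2 * a, 1, 0], ![-a, 1 - a + a ^ 2, 0],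
      ![-a ^ 2, 1 - a + a ^ 2, 0], ![a ^ 2, -1, 0], ![a, a - 1, 0], ![1, a - 2, 0]]
    ![![0, 1, 0], ![1, -1, 0], ![a, -2, 1], ![a, -a - 1, a], ![a, -a, a - 1], ![-a, 0, 1],
      ![-a, a + 1, 0], ![1 - 2 * a, a, 0]]

/-- The degrees of `forms a b` as polynomials in `b`, for generic `a`. -/
def formDegree : Fin 8 ⊕ Fin 8 → ℕ :=
  Sum.elim ![0, 0, 1, 1, 1, 1, 1, 1] ![1, 1, 2, 2, 2, 2, 1, 1]

theorem formDegree_le_two (j : Fin 8 ⊕ Fin 8) : formDegree j ≤ 2 := by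
  decide +revert

theorem formDegree_swap_ne_zero {j : Fin 8 ⊕ Fin 8} (hj : formDegree j = 0) :
    formDegree j.swap ≠ 0 := by
  decide +revert

theorem map_formCoeff {R S : Type*} [CommRing R] [CommRing S] (φ : R →+* S) (a : R)
    (j : Fin 8 ⊕ Fin 8) (i : Fin 3) : φ (formCoeff a j i) = formCoeff (φ a) j i := by
  rcases j with j | j <;> fin_cases j <;> fin_cases i <;> simp [formCoeff, map_ofNat φ 2]

theorem formCoeff_eq_zero {R : Type*} [CommRing R] (a : R) {j : Fin 8 ⊕ Fin 8} {i : Fin 3}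
    (h : formDegree j < i) : formCoeff a j i = 0 := by
  rcases j with j | j <;> fin_cases j <;> fin_cases i <;> simp [formCoeff, formDegree] at h ⊢

open Polynomial

/-- The polynomial of degree at most two with the given coefficients, constant term first. -/
def quadraticPoly {R : Type*} [CommRing R] (p : Fin 3 → R) : R[X] :=
  C (p 0) + C (p 1) * X + C (p 2) * X ^ 2

theorem eval_quadraticPoly_formCoeff {R : Type*} [CommRing R] (a b : R) (j : Fin 8 ⊕ Fin 8) :
    (quadraticPoly (formCoeff a j)).eval b = forms a b j := by
  rcases j with j | j <;> fin_cases j <;>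
    simp only [quadraticPoly, formCoeff, forms, form, Sum.elim_inl, Sum.elim_inr, Fin.isValue,
      Fin.zero_eta, Fin.mk_one, Fin.reduceFinMk, Matrix.cons_val, eval_add, eval_mul, eval_pow,
      eval_C, eval_X] <;> ring

/-- The resultant of two polynomials of formal degree one. -/
def linearResultant {R : Type*} [CommRing R] (p r : Fin 3 → R) : R :=
  p 1 * r 0 - p 0 * r 1

/-- The resultant of two polynomials of formal degree two. -/
def quadraticResultant {R : Type*} [CommRing R] (p r : Fin 3 → R) : R :=
  (p 2 * r 0 - p 0 * r 2) ^ 2 - (p 2 * r 1 - p 1 * r 2) * (p 1 * r 0 - p 0 * r 1)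

theorem isCoprime_of_add_eq_C {K : Type*} [Field K] {f g u v : K[X]} {c : K} (hc : c ≠ 0)
    (h : u * f + v * g = C c) : IsCoprime f g :=
  ⟨C c⁻¹ * u, C c⁻¹ * v, by rw [mul_assoc, mul_assoc, ← mul_add, h, ← C_mul, inv_mul_cancel₀ hc,
    C_1]⟩

theorem isCoprime_of_linearResultant_ne_zero {K : Type*} [Field K] {p r : Fin 3 → K}
    (hp : p 2 = 0) (hr : r 2 = 0) (h : linearResultant p r ≠ 0) :
    IsCoprime (quadraticPoly p) (quadraticPoly r) := by
  refine isCoprime_of_add_eq_C (u := C (-r 1)) (v := C (p 1)) h ?_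
  simp only [quadraticPoly, linearResultant, hp, hr, map_neg, map_sub, map_mul, map_zero]
  ring

theorem isCoprime_of_quadraticResultant_ne_zero {K : Type*} [Field K] {p r : Fin 3 → K}
    (h : quadraticResultant p r ≠ 0) : IsCoprime (quadraticPoly p) (quadraticPoly r) := by
  let m : K[X] := C (p 2 * r 0 - p 0 * r 2) - C (p 2 * r 1 - p 1 * r 2) * X
  let e := p 2 * r 1 - p 1 * r 2
  refine isCoprime_of_add_eq_C (u := C (e * r 1) - m * C (r 2))
    (v := m * C (p 2) - C (e * p 1)) h ?_
  simp only [m, e, quadraticPoly, quadraticResultant, map_sub, map_mul, map_pow]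
  ring

/-- The coefficients of the derivative of `quadraticPoly p`. -/
def derivCoeff {R : Type*} [CommRing R] (p : Fin 3 → R) : Fin 3 → R :=
  ![p 1, 2 * p 2, 0]

theorem quadraticPoly_derivCoeff {R : Type*} [CommRing R] (p : Fin 3 → R) :
    quadraticPoly (derivCoeff p) = derivative (quadraticPoly p) := by
  simp only [quadraticPoly, derivCoeff, Matrix.cons_val, derivative_add, derivative_C,
    derivative_C_mul, derivative_X, derivative_X_pow, Nat.cast_ofNat, map_mul, map_ofNat C 2,
    map_zero]
  ring

/-- A quantity whose nonvanishing makes the `j`-th and the `k`-th form coprime as polynomials in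
`b` if `j ≠ k`, and the `j`-th form separable if `j = k`. -/
def obstruction {R : Type*} [CommRing R] (a : R) (j k : Fin 8 ⊕ Fin 8) : R :=
  if formDegree j = 0 ∨ formDegree k = 0 then a * (1 - a) else
    (if formDegree j = 2 ∨ formDegree k = 2 then quadraticResultant else linearResultant)
      (formCoeff a j) (if j = k then derivCoeff (formCoeff a j) else formCoeff a k)

-- Every field with a square root of `-1` receives a homomorphism from the Gaussian integers, so one
-- witness with norm a power of two serves all odd characteristics at once.
theorem exists_norm_obstruction_dvd_two_pow (j k : Fin 8 ⊕ Fin 8) :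
    ∃ z ∈ [0, 1, -1, 2, ⟨0, 1⟩, (⟨1, 1⟩ : GaussianInt)],
      Zsqrtd.norm (obstruction z j k) ∣ 2 ^ 16 := by
  decide +kernel +revert

theorem map_obstruction {R S : Type*} [CommRing R] [CommRing S] (φ : R →+* S) (a : R)
    (j k : Fin 8 ⊕ Fin 8) : φ (obstruction a j k) = obstruction (φ a) j k := by
  unfold obstruction
  split_ifs <;>
    simp [quadraticResultant, linearResultant, derivCoeff, map_formCoeff, map_ofNat φ 2]

theorem natDegree_quadraticPoly_le {R : Type*} [CommRing R] (p : Fin 3 → R) :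
    (quadraticPoly p).natDegree ≤ 2 := by
  unfold quadraticPoly
  compute_degree

section Field

variable {F : Type*} [Field F] {a : F} {j k : Fin 8 ⊕ Fin 8}

theorem isUnit_quadraticPoly_formCoeff (hj : formDegree j = 0) (h : a * (1 - a) ≠ 0) :
    IsUnit (quadraticPoly (formCoeff a j)) := by
  obtain ⟨h₀, h₁⟩ := mul_ne_zero_iff.1 h
  have hconst : quadraticPoly (formCoeff a j) = C (formCoeff a j 0) := by
    simp [quadraticPoly, formCoeff_eq_zero a (j := j) (i := 1) (by simp [hj]),
      formCoeff_eq_zero a (j := j) (i := 2) (by simp [hj])]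
  rw [hconst, isUnit_C, isUnit_iff_ne_zero]
  rcases j with j | j <;> fin_cases j <;> simp_all [formDegree, formCoeff]

theorem isCoprime_of_obstruction_ne_zero (hjk : j ≠ k) (h : obstruction a j k ≠ 0) :
    IsCoprime (quadraticPoly (formCoeff a j)) (quadraticPoly (formCoeff a k)) := by
  unfold obstruction at h
  split_ifs at h with h₀ h₂
  · rcases h₀ with hj | hk
    · exact isCoprime_one_left.of_isCoprime_of_dvd_left (isUnit_quadraticPoly_formCoeff hj h).dvd
    · exact isCoprime_one_right.of_isCoprime_of_dvd_right (isUnit_quadraticPoly_formCoeff hk h).dvd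
  · exact isCoprime_of_quadraticResultant_ne_zero h
  · exact isCoprime_of_linearResultant_ne_zero (formCoeff_eq_zero a (by grind [formDegree_le_two]))
      (formCoeff_eq_zero a (by grind [formDegree_le_two])) h

theorem separable_of_obstruction_ne_zero (h : obstruction a j j ≠ 0) :
    (quadraticPoly (formCoeff a j)).Separable := by
  rw [Polynomial.Separable, ← quadraticPoly_derivCoeff]
  simp only [obstruction, if_true, or_self] at h
  split_ifs at h with h₀ h₂
  · exact isCoprime_one_left.of_isCoprime_of_dvd_left (isUnit_quadraticPoly_formCoeff h₀ h).dvd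
  · exact isCoprime_of_quadraticResultant_ne_zero h
  · exact isCoprime_of_linearResultant_ne_zero
      (formCoeff_eq_zero a (by grind [formDegree_le_two])) rfl h

theorem natDegree_pos_of_obstruction_ne_zero (hj : formDegree j ≠ 0) (h : obstruction a j j ≠ 0) :
    0 < (quadraticPoly (formCoeff a j)).natDegree := by
  by_contra! hdeg
  have hcoeff (n : ℕ) (hn : n ≠ 0) : (quadraticPoly (formCoeff a j)).coeff n = 0 :=
    coeff_eq_zero_of_natDegree_lt (by lia)
  have h₁ : formCoeff a j 1 = 0 := by simpa [quadraticPoly, coeff_X, coeff_C] using hcoeff 1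
  have h₂ : formCoeff a j 2 = 0 := by simpa [quadraticPoly, coeff_X, coeff_C] using hcoeff 2
  refine h ?_
  simp [obstruction, hj, h₁, h₂, derivCoeff, linearResultant, quadraticResultant, ite_apply]

end Field

section NatDegree

variable {R : Type*} [CommRing R] {p r : Fin 3 → R[X]} {n : ℕ}

theorem natDegree_linearResultant_le (hp : ∀ i, (p i).natDegree ≤ n)
    (hr : ∀ i, (r i).natDegree ≤ n) : (linearResultant p r).natDegree ≤ n + n :=
  (natDegree_sub_le_of_le (natDegree_mul_le_of_le (hp 1) (hr 0))
    (natDegree_mul_le_of_le (hp 0) (hr 1))).trans_eq (max_self _)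

theorem natDegree_quadraticResultant_le (hp : ∀ i, (p i).natDegree ≤ n)
    (hr : ∀ i, (r i).natDegree ≤ n) : (quadraticResultant p r).natDegree ≤ n + n + (n + n) := by
  have hminor (i j : Fin 3) : (p i * r j - p j * r i).natDegree ≤ n + n :=
    (natDegree_sub_le_of_le (natDegree_mul_le_of_le (hp i) (hr j))
      (natDegree_mul_le_of_le (hp j) (hr i))).trans_eq (max_self _)
  rw [quadraticResultant, sq]
  exact (natDegree_sub_le_of_le (natDegree_mul_le_of_le (hminor 2 0) (hminor 2 0))
    (natDegree_mul_le_of_le (hminor 2 1) (hminor 1 0))).trans_eq (max_self _)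

theorem natDegree_derivCoeff_le (hp : ∀ i, (p i).natDegree ≤ n) (i : Fin 3) :
    (derivCoeff p i).natDegree ≤ n := by
  fin_cases i
  · exact hp 1
  · exact (natDegree_C_mul_le 2 (p 2)).trans (hp 2)
  · simp [derivCoeff]

theorem natDegree_formCoeff_X_le (j : Fin 8 ⊕ Fin 8) (i : Fin 3) :
    (formCoeff (X : R[X]) j i).natDegree ≤ 2 := by
  rcases j with j | j <;> fin_cases j <;> fin_cases i <;>
    simp only [formCoeff, Sum.elim_inl, Sum.elim_inr, Fin.reduceFinMk, Fin.mk_one, Fin.zero_eta,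
      Fin.isValue, Matrix.cons_val] <;> compute_degree <;> norm_num

theorem natDegree_obstruction_X_le (j k : Fin 8 ⊕ Fin 8) :
    (obstruction (X : R[X]) j k).natDegree ≤ 8 := by
  have hj := natDegree_formCoeff_X_le (R := R) j
  rw [obstruction]
  generalize hr : (if j = k then derivCoeff (formCoeff (X : R[X]) j) else formCoeff X k) = r
  have hr (i : Fin 3) : (r i).natDegree ≤ 2 := by
    rw [← hr]
    split_ifs
    exacts [natDegree_derivCoeff_le hj i, natDegree_formCoeff_X_le k i]
  split_ifs
  · compute_degree
    norm_num
  · exact natDegree_quadraticResultant_le hj hr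
  · exact (natDegree_linearResultant_le hj hr).trans (by norm_num)

end NatDegree

section Generic

variable {F : Type*} [Field F]

theorem exists_obstruction_ne_zero (h₂ : (2 : F) ≠ 0) (hneg : IsSquare (-1 : F))
    (j k : Fin 8 ⊕ Fin 8) : ∃ a : F, obstruction a j k ≠ 0 := by
  obtain ⟨i, hi⟩ := hneg
  let φ : GaussianInt →+* F := Zsqrtd.lift ⟨i, by simp [hi]⟩
  obtain ⟨z, -, hz⟩ := exists_norm_obstruction_dvd_two_pow j k
  refine ⟨φ z, fun h => pow_ne_zero 16 h₂ ?_⟩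
  have hnorm : φ (Zsqrtd.norm (obstruction z j k)) = 0 := by
    rw [Zsqrtd.norm_eq_mul_conj, map_mul, map_obstruction, h, zero_mul]
  obtain ⟨c, hc⟩ := hz
  calc (2 : F) ^ 16 = φ (2 ^ 16 : ℤ) := by rw [map_intCast]; norm_num
    _ = 0 := by rw [hc, Int.cast_mul, map_mul, hnorm, zero_mul]

/-- A value of `a` is generic if no obstruction vanishes at it. -/
def IsGeneric (a : F) : Prop :=
  ∀ j k, obstruction a j k ≠ 0

theorem card_not_isGeneric_le [Fintype F] (h₂ : (2 : F) ≠ 0) (hneg : IsSquare (-1 : F)) :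
    (Finset.univ.filter fun a : F => ¬ IsGeneric a).card ≤ 2048 := by
  have hne (j k) : obstruction (X : F[X]) j k ≠ 0 := by
    obtain ⟨a, ha⟩ := exists_obstruction_ne_zero h₂ hneg j k
    have := map_obstruction (evalRingHom a) X j k
    rintro h
    simp_all
  calc _ ≤ ((Finset.univ : Finset ((Fin 8 ⊕ Fin 8) × (Fin 8 ⊕ Fin 8))).biUnion fun s =>
          (obstruction (X : F[X]) s.1 s.2).roots.toFinset).card := by
        refine Finset.card_le_card fun a ha => ?_
        obtain ⟨j, k, h⟩ : ∃ j k, obstruction a j k = 0 := by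
          simpa only [IsGeneric, not_forall, not_not] using (Finset.mem_filter.1 ha).2
        have := map_obstruction (evalRingHom a) X j k
        simp only [Finset.mem_biUnion, Finset.mem_univ, true_and, Multiset.mem_toFinset]
        refine ⟨(j, k), (mem_roots (hne j k)).2 ?_⟩
        simp_all
    _ ≤ (Finset.univ : Finset ((Fin 8 ⊕ Fin 8) × (Fin 8 ⊕ Fin 8))).card * 8 :=
        Finset.card_biUnion_le_card_mul _ _ _ fun s _ => (Multiset.toFinset_card_le _).trans <|
          (card_roots' _).trans (natDegree_obstruction_X_le _ _)
    _ = 2048 := by simp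

/-- The product of the forms `forms a b j` over `j ∈ S`, as a polynomial in `b`. -/
def formProd (a : F) (S : Finset (Fin 8 ⊕ Fin 8)) : F[X] :=
  ∏ j ∈ S, quadraticPoly (formCoeff a j)

theorem squarefree_formProd {a : F} (ha : IsGeneric a) (S : Finset (Fin 8 ⊕ Fin 8)) :
    Squarefree (formProd a S) :=
  (separable_prod' (fun j _ k _ hjk => isCoprime_of_obstruction_ne_zero hjk (ha j k)) fun j _ =>
    separable_of_obstruction_ne_zero (ha j j)).squarefree

theorem natDegree_formProd_le (a : F) (S : Finset (Fin 8 ⊕ Fin 8)) :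
    (formProd a S).natDegree ≤ 32 := by
  calc _ ≤ ∑ j ∈ S, (quadraticPoly (formCoeff a j)).natDegree := natDegree_prod_le _ _
    _ ≤ S.card * 2 := Finset.sum_le_card_nsmul _ _ _ fun j _ => natDegree_quadraticPoly_le _
    _ ≤ 16 * 2 := by gcongr; exact S.card_le_univ

theorem natDegree_formProd_pos {a : F} (ha : IsGeneric a) {S : Finset (Fin 8 ⊕ Fin 8)}
    {j : Fin 8 ⊕ Fin 8} (hj : j ∈ S) (hdeg : formDegree j ≠ 0) : 0 < (formProd a S).natDegree := by
  refine (natDegree_pos_of_obstruction_ne_zero hdeg (ha j j)).trans_le ?_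
  exact natDegree_le_of_dvd (Finset.dvd_prod_of_mem _ hj) (squarefree_formProd ha S).ne_zero

theorem eval_formProd (a b : F) (S : Finset (Fin 8 ⊕ Fin 8)) :
    (formProd a S).eval b = ∏ j ∈ S, forms a b j := by
  simp only [formProd, eval_prod, eval_quadraticPoly_formCoeff]

theorem abs_sum_prod_type_le {α β : Type*} [Fintype α] [Fintype β] {φ : α × β → ℝ} {M : ℝ}
    (p : α → Prop) (hφ : ∀ x, |φ x| ≤ 1) (hM : 0 ≤ M) (hp : ∀ a, p a → |∑ b, φ (a, b)| ≤ M) :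
    |∑ x, φ x| ≤
      Fintype.card α * M + (Finset.univ.filter fun a => ¬ p a).card * Fintype.card β := by
  have hfiber (a : α) : |∑ b, φ (a, b)| ≤ M + if ¬ p a then (Fintype.card β : ℝ) else 0 := by
    by_cases ha : p a
    · simpa [ha] using hp a ha
    · calc |∑ b, φ (a, b)| ≤ ∑ b, |φ (a, b)| := Finset.abs_sum_le_sum_abs _ _
        _ ≤ ∑ _b : β, (1 : ℝ) := Finset.sum_le_sum fun b _ => hφ (a, b)
        _ ≤ M + if ¬ p a then (Fintype.card β : ℝ) else 0 := by simpa [ha] using hM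
  calc |∑ x, φ x| ≤ ∑ a, |∑ b, φ (a, b)| := by
        rw [Fintype.sum_prod_type]
        exact Finset.abs_sum_le_sum_abs _ _
    _ ≤ ∑ a, (M + if ¬ p a then (Fintype.card β : ℝ) else 0) :=
        Finset.sum_le_sum fun a _ => hfiber a
    _ = _ := by
        rw [Finset.sum_add_distrib, ← Finset.sum_filter, Finset.sum_const, Finset.sum_const,
          nsmul_eq_mul, nsmul_eq_mul, Finset.card_univ]

theorem abs_prod_quadraticChar_le_one [Fintype F] {ι : Type*} (S : Finset ι) (f : ι → F) :
    |∏ i ∈ S, (quadraticChar F (f i) : ℝ)| ≤ 1 := by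
  rw [Finset.abs_prod]
  refine Finset.prod_le_one (fun _ _ => abs_nonneg _) fun i _ => ?_
  rcases eq_or_ne (f i) 0 with h | h
  · simp [h]
  · rcases quadraticChar_dichotomy h with h | h <;> simp [h]

theorem card_filter_formProd_eval_eq_zero_le [Fintype F] {a : F} (ha : IsGeneric a) :
    (Finset.univ.filter fun b => (formProd a Finset.univ).eval b = 0).card ≤ 32 := by
  have h₀ := (squarefree_formProd ha Finset.univ).ne_zero
  calc _ ≤ (formProd a Finset.univ).roots.toFinset.card := Finset.card_le_card fun b hb => by
        simpa [h₀] using hb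
    _ ≤ 32 := (Multiset.toFinset_card_le _).trans <| (card_roots' _).trans <|
        natDegree_formProd_le a _

section Count

variable [Fintype F]

local notation "q" => Fintype.card F

variable (F) in
theorem card_le_card_mul_sqrt : (q : ℝ) ≤ q * √q :=
  le_mul_of_one_le_right (Nat.cast_nonneg _) <| Real.one_le_sqrt.2 <| by
    exact_mod_cast Fintype.card_pos

theorem abs_sum_quadraticChar_formProd_le (hF : ringChar F ≠ 2) {a : F} (ha : IsGeneric a)
    {S : Finset (Fin 8 ⊕ Fin 8)} {j : Fin 8 ⊕ Fin 8} (hj : j ∈ S) (hdeg : formDegree j ≠ 0) :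
    |∑ b, ∏ j ∈ S, (quadraticChar F (forms a b j) : ℝ)| ≤ 8192 * √q := by
  have hweil := abs_sum_quadraticChar_le hF (squarefree_formProd ha S)
    (natDegree_formProd_pos ha hj hdeg)
  have hle : ((formProd a S).natDegree : ℝ) ≤ 32 := mod_cast natDegree_formProd_le a S
  simp only [eval_formProd, map_prod, Int.cast_prod] at hweil
  calc _ ≤ 8 * ((formProd a S).natDegree : ℝ) ^ 2 * √q := hweil
    _ ≤ 8 * 32 ^ 2 * √q := by gcongr
    _ = 8192 * √q := by norm_num

variable (hF : ringChar F ≠ 2) (hneg : IsSquare (-1 : F))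

include hF hneg

theorem abs_sum_quadraticChar_forms_le_of_formDegree_ne_zero {S : Finset (Fin 8 ⊕ Fin 8)}
    {j : Fin 8 ⊕ Fin 8} (hj : j ∈ S) (hdeg : formDegree j ≠ 0) :
    |∑ x : F × F, ∏ j ∈ S, (quadraticChar F (forms x.1 x.2 j) : ℝ)| ≤ 10240 * (q * √q) := by
  have hgen : ((Finset.univ.filter fun a : F => ¬ IsGeneric a).card : ℝ) ≤ 2048 :=
    mod_cast card_not_isGeneric_le (Ring.two_ne_zero hF) hneg
  have hsum := abs_sum_prod_type_le (M := 8192 * √q)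
    (φ := fun x : F × F => ∏ j ∈ S, (quadraticChar F (forms x.1 x.2 j) : ℝ)) IsGeneric
    (fun x => abs_prod_quadraticChar_le_one S _) (by positivity)
    fun a ha => abs_sum_quadraticChar_formProd_le hF ha hj hdeg
  have hexc := mul_le_mul hgen (card_le_card_mul_sqrt F) (Nat.cast_nonneg _) (by norm_num)
  linarith

theorem abs_sum_quadraticChar_forms_le {S : Finset (Fin 8 ⊕ Fin 8)} (hS : S.Nonempty) :
    |∑ x : F × F, ∏ j ∈ S, (quadraticChar F (forms x.1 x.2 j) : ℝ)| ≤ 10240 * (q * √q) := by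
  obtain ⟨j, hj⟩ := hS
  by_cases hdeg : formDegree j = 0
  · have hswap := abs_sum_quadraticChar_forms_le_of_formDegree_ne_zero hF hneg
      (Finset.mem_map_of_mem (Equiv.sumComm _ _).toEmbedding hj) (formDegree_swap_ne_zero hdeg)
    rw [← (Equiv.prodComm F F).sum_comp] at hswap
    simpa [forms_swap] using hswap
  · exact abs_sum_quadraticChar_forms_le_of_formDegree_ne_zero hF hneg hj hdeg

theorem card_forms_eq_zero_le :
    ((Finset.univ.filter fun x : F × F => ∃ j, forms x.1 x.2 j = 0).card : ℝ) ≤ 2080 * q := by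
  have hgen : ((Finset.univ.filter fun a : F => ¬ IsGeneric a).card : ℝ) ≤ 2048 :=
    mod_cast card_not_isGeneric_le (Ring.two_ne_zero hF) hneg
  have hsum := abs_sum_prod_type_le (α := F) (β := F) (M := 32)
    (φ := fun x => if (formProd x.1 Finset.univ).eval x.2 = 0 then 1 else 0) IsGeneric
    (fun x => by split_ifs <;> simp) (by norm_num) fun a ha => by
      rw [Finset.sum_boole, Nat.abs_cast]
      exact_mod_cast card_filter_formProd_eval_eq_zero_le ha
  rw [Finset.sum_boole, Nat.abs_cast] at hsum
  simp only [eval_formProd, Finset.prod_eq_zero_iff, Finset.mem_univ, true_and] at hsum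
  calc _ ≤ q * 32 + (Finset.univ.filter fun a : F => ¬ IsGeneric a).card * (q : ℝ) := hsum
    _ ≤ q * 32 + 2048 * q := by gcongr
    _ = 2080 * q := by ring

end Count

end Generic

end Forms

section QuadraticClass

variable {F : Type*} [Field F] [Fintype F] {x y z : F} {s t : Bool}

/-- `HasClass x t` says that `x` is nonzero and is a square exactly if `t` is true. -/
def HasClass (x : F) (t : Bool) : Prop :=
  (quadraticChar F x : ℝ) = boolSign t

theorem HasClass.ne_zero (hx : HasClass x t) : x ≠ 0 := by
  rintro rfl
  simpa [← show _ = boolSign t from hx] using abs_boolSign t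

theorem HasClass.isSquare_iff (hx : HasClass x t) : IsSquare x ↔ t = true := by
  rw [← quadraticChar_one_iff_isSquare hx.ne_zero, ← @Int.cast_inj ℝ, show _ = boolSign t from hx]
  cases t <;> norm_num [boolSign]

theorem HasClass.eq (hs : HasClass x s) (ht : HasClass x t) : s = t :=
  Bool.eq_iff_iff.2 (hs.isSquare_iff.symm.trans ht.isSquare_iff)

theorem exists_hasClass (hx : x ≠ 0) : ∃ t, HasClass x t := by
  rcases quadraticChar_dichotomy hx with h | h
  · exact ⟨true, by simp [HasClass, boolSign, h]⟩
  · exact ⟨false, by simp [HasClass, boolSign, h]⟩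

theorem exists_hasClass_eq (hF : ringChar F ≠ 2) (t : Bool) : ∃ x : F, HasClass x t := by
  cases t
  · obtain ⟨x, hx⟩ := quadraticChar_exists_neg_one hF
    exact ⟨x, by simp [HasClass, boolSign, hx]⟩
  · exact ⟨1, by simp [HasClass, boolSign]⟩

theorem boolSign_beq (s t : Bool) : boolSign (s == t) = boolSign s * boolSign t := by
  cases s <;> cases t <;> norm_num [boolSign]

theorem HasClass.mul (hx : HasClass x s) (hy : HasClass y t) : HasClass (x * y) (s == t) := by
  rw [HasClass] at *
  rw [map_mul, Int.cast_mul, hx, hy, boolSign_beq]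

theorem hasClass_one : HasClass (1 : F) true := by
  simp [HasClass, boolSign]

theorem HasClass.list_prod {ι : Type*} {f : ι → F} {t : ι → Bool} (h : ∀ i, HasClass (f i) (t i))
    (l : List ι) : HasClass (l.map f).prod ((l.map t).foldr (· == ·) true) := by
  induction l with
  | nil => exact hasClass_one
  | cons i l ih => simpa using (h i).mul ih

theorem hasClass_neg_iff (hneg : IsSquare (-1 : F)) : HasClass (-x) t ↔ HasClass x t := by
  have hχ : quadraticChar F (-1) = 1 := (quadraticChar_one_iff_isSquare (by simp)).2 hneg
  rw [HasClass, HasClass, ← neg_one_mul x, map_mul, hχ, one_mul]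

theorem HasClass.of_eq_neg_mul (hneg : IsSquare (-1 : F)) (hx : HasClass x s) (hy : HasClass y t)
    (h : x = -(z * y)) : HasClass z (t == s) := by
  have hz : z ≠ 0 := fun hz => hx.ne_zero (by simp [h, hz])
  obtain ⟨r, hr⟩ := exists_hasClass hz
  have hrt : HasClass x (r == t) := h ▸ (hasClass_neg_iff hneg).2 (hr.mul hy)
  rw [hx.eq hrt]
  cases r <;> cases t <;> exact hr

end QuadraticClass

section Quasigroup

variable {F : Type*} [Field F] {a b : F}

theorem qop_self (u : F) : qop a b u u = u := by
  simp [qop]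

theorem qop_eq_add_cond_mul {u v : F} {r : Bool} (h : IsSquare (v - u) ↔ r = true) :
    qop a b u v = u + cond r a b * (v - u) := by
  cases r <;> simp [qop, h]

theorem exists_isSquare_iff_eq_true (x : F) : ∃ r : Bool, IsSquare x ↔ r = true :=
  ⟨decide (IsSquare x), decide_eq_true_iff.symm⟩

theorem HasClass.qop_mul_add [Fintype F] {s : F} {t : Bool} (hs : HasClass s t) (c u v : F) :
    qop a b (s * u + c) (s * v + c) = s * qop (cond t a b) (cond t b a) u v + c := by
  rcases eq_or_ne u v with rfl | huv
  · rw [qop_self, qop_self]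
  obtain ⟨r, hr⟩ := exists_hasClass (sub_ne_zero.2 huv.symm)
  have hsr : HasClass (s * v + c - (s * u + c)) (t == r) := by
    rw [add_sub_add_right_eq_sub, ← mul_sub]
    exact hs.mul hr
  have hcond : cond (t == r) a b = cond r (cond t a b) (cond t b a) := by
    cases t <;> cases r <;> rfl
  rw [qop_eq_add_cond_mul hsr.isSquare_iff, qop_eq_add_cond_mul hr.isSquare_iff, hcond]
  ring

theorem eq_of_qop_eq_qop_qop (ha₀ : a ≠ 0) (ha₁ : a ≠ 1) (hb₀ : b ≠ 0) (hb₁ : b ≠ 1) {u w : F}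
    (h : qop a b u w = qop a b u (qop a b u w)) : u = w := by
  have hc (r : Bool) : cond r a b ≠ 0 ∧ 1 - cond r a b ≠ 0 := by
    cases r <;> simp [*, sub_ne_zero, Ne.symm]
  obtain ⟨r, hr⟩ := exists_isSquare_iff_eq_true (w - u)
  obtain ⟨s, hs⟩ := exists_isSquare_iff_eq_true (qop a b u w - u)
  rw [qop_eq_add_cond_mul hs, qop_eq_add_cond_mul hr] at h
  have hprod : cond r a b * (1 - cond s a b) * (w - u) = 0 := by linear_combination h
  have hwu := (mul_eq_zero.1 hprod).resolve_left (mul_ne_zero (hc r).1 (hc s).2)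
  exact (sub_eq_zero.1 hwu).symm

theorem ne_of_maxNA (h : MaxNA a b) : a ≠ b := by
  rintro rfl
  refine zero_ne_one (h 0 1 0 ?_).1
  simp only [qop, ite_self]
  ring

theorem maxNA_iff_forall_bool [Finite F] (hF : ringChar F ≠ 2) (ha₀ : a ≠ 0) (ha₁ : a ≠ 1)
    (hb₀ : b ≠ 0) (hb₁ : b ≠ 1) :
    MaxNA a b ↔ ∀ t w, qop (cond t a b) (cond t b a) (qop (cond t a b) (cond t b a) 0 1) w ≠
      qop (cond t a b) (cond t b a) 0 (qop (cond t a b) (cond t b a) 1 w) := by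
  have := Fintype.ofFinite F
  constructor
  · intro h t w hw
    obtain ⟨s, hs⟩ := exists_hasClass_eq hF t
    have hq := hs.qop_mul_add (a := a) (b := b) 0
    simp only [add_zero] at hq
    have := (h (s * 0) (s * 1) (s * w) (by simp only [hq, hw])).1
    simp [hs.ne_zero.symm] at this
  · intro h u v w hw
    rcases eq_or_ne u v with rfl | huv
    · refine ⟨rfl, eq_of_qop_eq_qop_qop ha₀ ha₁ hb₀ hb₁ ?_⟩
      rwa [qop_self] at hw
    obtain ⟨d, rfl⟩ : ∃ d, d * 1 + u = v := ⟨v - u, by ring⟩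
    have hd : d ≠ 0 := by simpa using huv
    obtain ⟨z, rfl⟩ : ∃ z, d * z + u = w := ⟨(w - u) / d, by field_simp; ring⟩
    obtain ⟨t, ht⟩ := exists_hasClass hd
    refine absurd (mul_left_cancel₀ hd (add_right_cancel (b := u) ?_)) (h t z)
    simpa only [← ht.qop_mul_add, mul_zero, zero_add] using hw

end Quasigroup

section Patterns

/-- The equation `(0 * 1) * w = 0 * (1 * w)` in `Q_{a,b}` becomes linear in `w` once the factors
`c₂`, `c₃`, `c₄` used in `1 * w`, `(0 * 1) * w` and `0 * (1 * w)` are fixed in `{a, b}`. Its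
solution satisfies `w - 1 = -A / B`, `w - 0 * 1 = -C / B` and `1 * w - 0 = -D / B`, where
`B`, `A`, `C`, `D` are the entries of `assocForms a c₂ c₃ c₄`. -/
def assocForms {R : Type*} [CommRing R] (a c₂ c₃ c₄ : R) : Fin 4 → R :=
  ![c₂ * c₄ - c₃, c₄ - a - c₃ + a * c₃, c₄ * (1 - c₂ + a * c₂) - a,
    c₃ * (1 - c₂ + a * c₂) - a * c₂]

/-- The factorizations of `assocForms` into members of `forms a b`, up to sign; the Boolean
arguments tell whether `c₂`, `c₃` and `c₄` are `a` or `b`. -/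
def assocFactors : Bool → Bool → Bool → Fin 4 → List (Fin 8 ⊕ Fin 8)
  | true, true, true =>
    ![[.inl 0, .inl 1], [.inl 0, .inl 1], [.inl 0, .inl 0, .inl 1], [.inl 0, .inl 1, .inl 1]]
  | true, true, false => ![[.inl 0, .inr 1], [.inl 2], [.inl 3], [.inl 0, .inl 1, .inl 1]]
  | true, false, true => ![[.inl 5], [.inr 0, .inl 1], [.inl 0, .inl 0, .inl 1], [.inl 4]]
  | true, false, false => ![[.inr 0, .inl 1], [.inl 0, .inr 1], [.inl 3], [.inl 4]]
  | false, true, true =>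
    ![[.inl 0, .inr 1], [.inl 0, .inl 1], [.inl 0, .inr 0, .inl 1], [.inl 0, .inl 7]]
  | false, true, false => ![[.inr 5], [.inl 2], [.inr 1, .inl 6], [.inl 0, .inl 7]]
  | false, false, true =>
    ![[.inr 0, .inl 1], [.inr 0, .inl 1], [.inl 0, .inr 0, .inl 1], [.inr 0, .inl 1, .inr 1]]
  | false, false, false =>
    ![[.inr 0, .inr 1], [.inl 0, .inr 1], [.inr 1, .inl 6], [.inr 0, .inl 1, .inr 1]]

theorem assocForms_eq_or_eq_neg {R : Type*} [CommRing R] (a b : R) (r s u : Bool) (i : Fin 4) :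
    assocForms a (cond r a b) (cond s a b) (cond u a b) i =
        ((assocFactors r s u i).map (forms a b)).prod ∨
      assocForms a (cond r a b) (cond s a b) (cond u a b) i =
        -((assocFactors r s u i).map (forms a b)).prod := by
  cases r <;> cases s <;> cases u <;> fin_cases i <;>
    simp only [assocForms, assocFactors, forms, form, Fin.isValue, Fin.zero_eta, Fin.mk_one,
      Fin.reduceFinMk, cond_true, cond_false, Matrix.cons_val, List.map_cons, List.map_nil,
      List.prod_cons, List.prod_nil, Sum.elim_inl, Sum.elim_inr] <;>
    first | exact .inl (by ring1) | exact .inr (by ring1)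

/-- The class of `assocForms` at a pair `(a, b)` whose `forms` have the classes `t`. -/
def assocClass (t : Fin 8 ⊕ Fin 8 → Bool) (r s u : Bool) (i : Fin 4) : Bool :=
  ((assocFactors r s u i).map t).foldr (· == ·) true

/-- The pattern `t` of classes of `forms a b` admits a solution of `(0 * 1) * w = 0 * (1 * w)`. -/
def HasSolution (t : Fin 8 ⊕ Fin 8 → Bool) : Prop :=
  ∃ r s u, (assocClass t r s u 0 == assocClass t r s u 1) = r ∧
    (assocClass t r s u 0 == assocClass t r s u 2) = s ∧
    (assocClass t r s u 0 == assocClass t r s u 3) = u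

section Field

variable {F : Type*} [Field F] {a b : F} {t : Fin 8 ⊕ Fin 8 → Bool}

theorem ne_zero_and_ne_one_of_forms_ne_zero (h : ∀ j, forms a b j ≠ 0) :
    a ≠ 0 ∧ a ≠ 1 ∧ b ≠ 0 ∧ b ≠ 1 :=
  ⟨h (.inl 0), fun ha => h (.inl 1) (by simp [forms, form, ha]), h (.inr 0),
    fun hb => h (.inr 1) (by simp [forms, form, hb])⟩

theorem qop_zero_one : qop a b 0 1 = a := by
  simp [qop]

theorem qop_assoc_iff {r s u : Bool} {w : F} (hr : IsSquare (w - 1) ↔ r = true)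
    (hs : IsSquare (w - a) ↔ s = true) (hu : IsSquare (1 + cond r a b * (w - 1)) ↔ u = true) :
    qop a b (qop a b 0 1) w = qop a b 0 (qop a b 1 w) ↔
      assocForms a (cond r a b) (cond s a b) (cond u a b) 1 =
        -((w - 1) * assocForms a (cond r a b) (cond s a b) (cond u a b) 0) := by
  rw [qop_zero_one, qop_eq_add_cond_mul hs, qop_eq_add_cond_mul hr,
    qop_eq_add_cond_mul (by rwa [sub_zero])]
  simp only [assocForms, Matrix.cons_val]
  constructor <;> intro h <;> linear_combination -h

variable [Fintype F] (hneg : IsSquare (-1 : F))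
  (ht : ∀ j, HasClass (forms a b j) (t j))

include hneg ht

theorem hasClass_assocForms (r s u : Bool) (i : Fin 4) :
    HasClass (assocForms a (cond r a b) (cond s a b) (cond u a b) i) (assocClass t r s u i) := by
  rcases assocForms_eq_or_eq_neg a b r s u i with h | h <;> rw [h]
  · exact HasClass.list_prod ht _
  · exact (hasClass_neg_iff hneg).2 (HasClass.list_prod ht _)

theorem hasClass_of_assocForms_eq {r s u : Bool} {w : F}
    (h : assocForms a (cond r a b) (cond s a b) (cond u a b) 1 =
      -((w - 1) * assocForms a (cond r a b) (cond s a b) (cond u a b) 0)) :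
    HasClass (w - 1) (assocClass t r s u 0 == assocClass t r s u 1) ∧
      HasClass (w - a) (assocClass t r s u 0 == assocClass t r s u 2) ∧
      HasClass (1 + cond r a b * (w - 1)) (assocClass t r s u 0 == assocClass t r s u 3) := by
  have hclass := hasClass_assocForms hneg ht r s u
  refine ⟨.of_eq_neg_mul hneg (hclass 1) (hclass 0) h,
    .of_eq_neg_mul hneg (hclass 2) (hclass 0) ?_, .of_eq_neg_mul hneg (hclass 3) (hclass 0) ?_⟩ <;>
  simp only [assocForms, Matrix.cons_val] at h ⊢
  · linear_combination h
  · linear_combination cond r a b * h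

theorem exists_assoc_iff_hasSolution :
    (∃ w, qop a b (qop a b 0 1) w = qop a b 0 (qop a b 1 w)) ↔ HasSolution t := by
  constructor
  · rintro ⟨w, hw⟩
    obtain ⟨r, hr⟩ := exists_isSquare_iff_eq_true (w - 1)
    obtain ⟨s, hs⟩ := exists_isSquare_iff_eq_true (w - a)
    obtain ⟨u, hu⟩ := exists_isSquare_iff_eq_true (1 + cond r a b * (w - 1))
    obtain ⟨hr', hs', hu'⟩ := hasClass_of_assocForms_eq hneg ht ((qop_assoc_iff hr hs hu).1 hw)
    exact ⟨r, s, u, Bool.eq_iff_iff.2 (hr'.isSquare_iff.symm.trans hr),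
      Bool.eq_iff_iff.2 (hs'.isSquare_iff.symm.trans hs),
      Bool.eq_iff_iff.2 (hu'.isSquare_iff.symm.trans hu)⟩
  · rintro ⟨r, s, u, hr, hs, hu⟩
    have hB := (hasClass_assocForms hneg ht r s u 0).ne_zero
    obtain ⟨w, hw⟩ : ∃ w, assocForms a (cond r a b) (cond s a b) (cond u a b) 1 =
        -((w - 1) * assocForms a (cond r a b) (cond s a b) (cond u a b) 0) :=
      ⟨1 - assocForms a (cond r a b) (cond s a b) (cond u a b) 1 /
        assocForms a (cond r a b) (cond s a b) (cond u a b) 0, by field_simp; ring⟩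
    have hclass := hasClass_of_assocForms_eq hneg ht hw
    rw [hr, hs, hu] at hclass
    exact ⟨w, (qop_assoc_iff hclass.1.isSquare_iff hclass.2.1.isSquare_iff
      hclass.2.2.isSquare_iff).2 hw⟩

theorem maxNA_iff_not_hasSolution (hF : ringChar F ≠ 2) :
    MaxNA a b ↔ ¬ HasSolution t ∧ ¬ HasSolution (t ∘ Sum.swap) := by
  have ht' (j) : HasClass (forms b a j) ((t ∘ Sum.swap) j) := forms_swap a b j ▸ ht j.swap
  obtain ⟨ha₀, ha₁, hb₀, hb₁⟩ := ne_zero_and_ne_one_of_forms_ne_zero fun j => (ht j).ne_zero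
  rw [maxNA_iff_forall_bool hF ha₀ ha₁ hb₀ hb₁,
    ← exists_assoc_iff_hasSolution hneg ht, ← exists_assoc_iff_hasSolution hneg ht',
    Bool.forall_bool]
  simp only [cond_true, cond_false, not_exists, ne_eq, and_comm]

end Field

/-- The patterns of classes of `forms a b` for which `(a, b)` lies in `Σ` and `Q_{a,b}` is maximally
nonassociative. -/
def IsGood (t : Fin 8 ⊕ Fin 8 → Bool) : Prop :=
  (t (.inl 0) = t (.inr 0) ∧ t (.inl 1) = t (.inr 1)) ∧
    ¬ HasSolution t ∧ ¬ HasSolution (t ∘ Sum.swap)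

theorem mem_sigSet_and_maxNA_iff_isGood {F : Type*} [Field F] [Fintype F] (hF : ringChar F ≠ 2)
    (hneg : IsSquare (-1 : F)) {a b : F} {t : Fin 8 ⊕ Fin 8 → Bool}
    (ht : ∀ j, HasClass (forms a b j) (t j)) :
    (a, b) ∈ SigSet F ∧ MaxNA a b ↔ IsGood t := by
  rw [IsGood, ← maxNA_iff_not_hasSolution hneg ht hF]
  refine and_congr_left fun hmax => ?_
  obtain ⟨ha₀, ha₁, hb₀, hb₁⟩ := ne_zero_and_ne_one_of_forms_ne_zero fun j => (ht j).ne_zero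
  have hab : IsSquare (a * b) ↔ _ := ((ht (.inl 0)).mul (ht (.inr 0))).isSquare_iff
  have hab₁ : IsSquare ((1 - a) * (1 - b)) ↔ _ := ((ht (.inl 1)).mul (ht (.inr 1))).isSquare_iff
  simp [SigSet, ne_of_maxNA hmax, ha₀, ha₁, hb₀, hb₁, hab, hab₁]

instance : DecidablePred HasSolution := fun t => by
  unfold HasSolution
  infer_instance

instance : DecidablePred IsGood := fun t => by
  unfold IsGood
  infer_instance

theorem hasSolution_sumElim_iff (t t' : Fin 8 → Bool) :
    HasSolution (Sum.elim t t') ↔ HasSolution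
      (Sum.elim t ![t' 0, t' 1, false, false, false, t' 5, false, false]) := by
  simp only [HasSolution, Bool.exists_bool]
  rfl

/-- The restrictions to the first summand `Fin 8` of the patterns without solution that take the
values `α`, `β`, `γ` at the indices `0`, `1`, `5` of both summands, respectively `δ` instead of `γ`
at the index `5` of the second summand. -/
def halfPatterns (α β γ δ : Bool) : Finset (Fin 8 → Bool) :=
  Finset.univ.filter fun t => (t 0 = α ∧ t 1 = β ∧ t 5 = γ) ∧
    ¬ HasSolution (Sum.elim t ![α, β, false, false, false, δ, false, false])

theorem card_filter_isGood_eq_sum :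
    (Finset.univ.filter IsGood).card = ∑ v : Bool × Bool × Bool × Bool,
      (halfPatterns v.1 v.2.1 v.2.2.1 v.2.2.2).card *
        (halfPatterns v.1 v.2.1 v.2.2.2 v.2.2.1).card := by
  rw [Finset.card_eq_sum_card_fiberwise (t := Finset.univ)
    (f := fun t => (t (.inl 0), t (.inl 1), t (.inl 5), t (.inr 5))) fun _ _ => Finset.mem_univ _]
  refine Finset.sum_congr rfl fun ⟨α, β, γ, δ⟩ _ => ?_
  rw [← Finset.card_product]
  refine Finset.card_equiv (Equiv.sumArrowEquivProdArrow _ _ _) fun t => ?_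
  obtain ⟨⟨t, t'⟩, rfl⟩ := (Equiv.sumArrowEquivProdArrow _ _ _).symm.surjective t
  have hswap : Sum.elim t t' ∘ Sum.swap = Sum.elim t' t := by ext (j | j) <;> rfl
  simp only [Prod.mk.injEq, IsGood, Equiv.sumArrowEquivProdArrow, Equiv.symm_mk,
    Equiv.coe_fn_mk, Finset.mem_filter, Finset.mem_univ, Sum.elim_inl, Sum.elim_inr,
    hasSolution_sumElim_iff t t', hswap, hasSolution_sumElim_iff t' t, true_and, halfPatterns,
    Sum.elim_comp_inl, Sum.elim_comp_inr, Finset.mem_product, Fin.isValue]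
  grind

theorem card_filter_isGood : (Finset.univ.filter IsGood).card = 1906 := by
  rw [card_filter_isGood_eq_sum]
  decide +kernel

end Patterns

section Asymptotics

theorem abs_ncard_sub_ncard_le {X : Type*} [Finite X] {s t : Set X} {e : Finset X}
    (h : ∀ x ∉ e, x ∈ s ↔ x ∈ t) : |(s.ncard : ℝ) - t.ncard| ≤ e.card := by
  have hle {s t : Set X} (h : ∀ x ∉ e, x ∈ s → x ∈ t) : (s.ncard : ℝ) ≤ t.ncard + e.card := by
    rw [← Set.ncard_coe_finset]
    exact_mod_cast (Set.ncard_le_ncard fun x hx => or_iff_not_imp_right.2 fun he => h x he hx).trans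
      (Set.ncard_union_le t e)
  rw [abs_sub_le_iff, sub_le_iff_le_add', sub_le_iff_le_add']
  exact ⟨hle fun x hx => (h x hx).1, hle fun x hx => (h x hx).2⟩

variable {F : Type*} [Field F] [Fintype F] (hF : ringChar F ≠ 2) (hneg : IsSquare (-1 : F))

local notation "q" => Fintype.card F

include hF hneg

theorem abs_sigmaCount_sub_ncard_le :
    |(sigmaCount F : ℝ) - {x : F × F | ∃ t ∈ Finset.univ.filter IsGood,
      ∀ j, HasClass (forms x.1 x.2 j) (t j)}.ncard| ≤ 2080 * q := by
  refine (abs_ncard_sub_ncard_le fun x hx => ?_).trans (card_forms_eq_zero_le hF hneg)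
  simp only [Finset.mem_filter, Finset.mem_univ, true_and, not_exists] at hx
  choose t ht using fun j => exists_hasClass (hx j)
  rw [Set.mem_ofPred_eq, mem_sigSet_and_maxNA_iff_isGood hF hneg ht]
  constructor
  · exact fun h => ⟨t, by simpa using h, ht⟩
  · rintro ⟨t', ht', hclass⟩
    obtain rfl : t = t' := funext fun j => (ht j).eq (hclass j)
    simpa using ht'

theorem abs_sigmaCount_sub_le :
    |(sigmaCount F : ℝ) - 953 / 2 ^ 15 * q ^ 2| ≤ 23484000 * (q * √q) := by
  have hpat := abs_ncard_exists_mem_sub_le (X := F × F) (Finset.univ.filter IsGood)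
    (χ := fun j x => (quadraticChar F (forms x.1 x.2 j) : ℝ)) (Z := 2080 * q)
    (fun j x => ?_) (fun S hS => abs_sum_quadraticChar_forms_le hF hneg hS) ?_
  · have hmain : ((1906 : ℕ) : ℝ) / 2 ^ Fintype.card (Fin 8 ⊕ Fin 8) * Fintype.card (F × F) =
        953 / 2 ^ 15 * q ^ 2 := by
      rw [Fintype.card_sum, Fintype.card_fin, Fintype.card_prod]
      push_cast
      ring
    rw [card_filter_isGood, hmain] at hpat
    calc |(sigmaCount F : ℝ) - 953 / 2 ^ 15 * q ^ 2|
        ≤ 2080 * q + (1906 : ℕ) * (10240 * (q * √q) + 2080 * q) :=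
          (abs_sub_le _ _ _).trans (add_le_add (abs_sigmaCount_sub_ncard_le hF hneg) hpat)
      _ ≤ 23484000 * (q * √q) := by
          push_cast
          linarith [card_le_card_mul_sqrt F]
  · obtain h | h := eq_or_ne (forms x.1 x.2 j) 0
    · simp [h]
    · exact .inr (mod_cast quadraticChar_dichotomy h)
  · simpa only [Int.cast_eq_zero, quadraticChar_eq_zero_iff] using card_forms_eq_zero_le hF hneg

end Asymptotics

/-- As `q` runs through prime powers with `q ≡ 1 (mod 4)`, `σ(q)/q²` converges
to `953·2⁻¹⁵`. -/
theorem sigma_ratio_tendsto_one_mod_four :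
    ∀ ε : ℝ, 0 < ε → ∃ N : ℕ,
      ∀ (q : ℕ) (F : Type) [Field F] [Fintype F],
        Fintype.card F = q → q % 4 = 1 → q > N →
        |(sigmaCount F : ℝ) / (q : ℝ) ^ 2 - 953 / 2 ^ 15| < ε := by
  intro ε hε
  obtain ⟨N, hN⟩ := exists_nat_gt ((23484000 / ε) ^ 2)
  refine ⟨N, ?_⟩
  rintro q F _ _ rfl hmod hgt
  have hF : ringChar F ≠ 2 := fun h => by
    have := FiniteField.even_card_of_char_two h
    omega
  have hneg : IsSquare (-1 : F) := FiniteField.isSquare_neg_one_iff.2 (by omega)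
  have hq : (0 : ℝ) < Fintype.card F := mod_cast Fintype.card_pos
  have hsqrt : 23484000 / ε < √(Fintype.card F) :=
    Real.lt_sqrt_of_sq_lt (hN.trans (mod_cast hgt))
  calc |(sigmaCount F : ℝ) / (Fintype.card F : ℝ) ^ 2 - 953 / 2 ^ 15|
      = |(sigmaCount F : ℝ) - 953 / 2 ^ 15 * (Fintype.card F : ℝ) ^ 2| /
          (Fintype.card F : ℝ) ^ 2 := by
        rw [div_sub' (by positivity), abs_div, abs_sq, mul_comm]
    _ ≤ 23484000 * (Fintype.card F * √(Fintype.card F)) / (Fintype.card F : ℝ) ^ 2 := by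
        gcongr
        exact abs_sigmaCount_sub_le hF hneg
    _ = 23484000 / √(Fintype.card F) := by
        rw [div_eq_div_iff (by positivity) (by positivity)]
        linear_combination 23484000 * (Fintype.card F : ℝ) * Real.mul_self_sqrt hq.le
    _ < ε := by rwa [div_lt_comm₀ (by positivity) hε]
end
end

section
/- Let q run through all prime powers with q ≡ 3 (mod 4). Then σ(q)/q² converges to 825·2⁻¹⁶; that is, for every real ε > 0 there exists N such that for every prime power q with q ≡ 3 (mod 4) and q > N one has |σ(q)/q² − 825/2¹⁶| < ε. -/
/-!
Put `x = a / b` and `y = (1 - a) / (1 - b)`, so that `Σ(F)` becomes the set of pairs of distinct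
squares different from `0` and `1`. By translation, nonassociativity of `Q_{a,b}` only concerns the
triples `(0, X, X + Y)`. Once the square classes of the four differences involved are prescribed,
the associativity equation is linear in `X` and `Y`, so it has a solution of these classes exactly
when the classes agree along an explicit line. If `-1` is not a square, this depends only on the
square classes of seventeen polynomials in `x` and `y`. For all but boundedly many `y`, a product of
some of these is, up to a factor depending on `y` only, a squarefree polynomial in `x`, and
Stepanov's method bounds the sum of its quadratic characters by `o(q)` unless it is constant. Hence
the `2 ^ 17` sign vectors are asymptotically equidistributed, and `1650` of them yield a maximally
nonassociative quasigroup.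
-/

open scoped Classical

noncomputable section

namespace MaxNonassoc

open Polynomial

section Stepanov

lemma eq_zero_of_mul_sq_eq_C_mul_sq {F : Type*} [Field F] {f r s : F[X]} {c : F}
    (hf : Squarefree f) (hd : 0 < f.natDegree) (hc : c ≠ 0) (h : f * r ^ 2 = C c * s ^ 2) :
    r = 0 ∧ s = 0 := by
  have hr : r = 0 := by
    by_contra hr
    have hcu : IsUnit (C c) := isUnit_C.2 hc.isUnit
    obtain ⟨t, rfl⟩ : r ∣ s :=
      (IsIntegrallyClosed.pow_dvd_pow_iff two_ne_zero).1
        (hcu.dvd_mul_left.1 ⟨f, by rw [← h, mul_comm]⟩)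
    have hft : f = C c * t ^ 2 :=
      mul_right_cancel₀ (pow_ne_zero 2 hr) (by rw [h]; ring)
    have ht : IsUnit t := hf t ⟨C c, by rw [hft]; ring⟩
    exact hd.ne' (natDegree_eq_zero_of_isUnit (hft ▸ hcu.mul (ht.pow 2)))
  subst hr
  simpa [hc] using h.symm

lemma X_pow_dvd_expand_sub_C {R : Type*} [CommRing R] (f : R[X]) (n : ℕ) :
    X ^ n ∣ expand R n f - C (f.eval 0) := by
  refine ⟨expand R n f.divX, ?_⟩
  conv_lhs => rw [← f.divX_mul_X_add]
  simp [coeff_zero_eq_eval_zero, mul_comm]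

section Nonvanishing

variable {F : Type*} [Field F] [Fintype F] {f : F[X]} {c D : ℕ}

lemma X_pow_card_dvd_mul_sq_sub (hc : 2 * c + 1 = Fintype.card F) {r s A B : F[X]}
    (h : (r + X ^ Fintype.card F * A) + f ^ c * (s + X ^ Fintype.card F * B) = 0) :
    X ^ Fintype.card F ∣ f * r ^ 2 - C (f.eval 0) * s ^ 2 := by
  obtain ⟨E, hE⟩ := X_pow_dvd_expand_sub_C f (Fintype.card F)
  rw [FiniteField.expand_card] at hE
  set q := Fintype.card F
  have hfq : f ^ q = f * (f ^ c) ^ 2 := by rw [← hc]; ring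
  have hsq : f * (r + X ^ q * A) ^ 2 = f ^ q * (s + X ^ q * B) ^ 2 := by
    rw [hfq, eq_neg_of_add_eq_zero_left h]; ring
  refine ⟨-(f * (2 * r * A + X ^ q * A ^ 2)) + f ^ q * (2 * s * B + X ^ q * B ^ 2)
    + E * s ^ 2, ?_⟩
  linear_combination hsq + s ^ 2 * hE

/-- Squaring replaces `f ^ c` by `f ^ q ≡ f 0` modulo `X ^ q`, and the degrees are too small for a
nontrivial congruence modulo `X ^ q`. -/
lemma eq_zero_of_add_mul_pow_eq_zero (hf : Squarefree f) (hd : 0 < f.natDegree)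
    (hf0 : f.eval 0 ≠ 0) (hc : 2 * c + 1 = Fintype.card F)
    (hD : f.natDegree + 2 * D < Fintype.card F) {r s A B : F[X]}
    (hr : r.natDegree ≤ D) (hs : s.natDegree ≤ D)
    (h : (r + X ^ Fintype.card F * A) + f ^ c * (s + X ^ Fintype.card F * B) = 0) :
    r = 0 ∧ s = 0 := by
  refine eq_zero_of_mul_sq_eq_C_mul_sq hf hd hf0 (sub_eq_zero.1 ?_)
  refine eq_zero_of_dvd_of_natDegree_lt (X_pow_card_dvd_mul_sq_sub hc h) ?_
  rw [natDegree_X_pow]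
  refine ((natDegree_sub_le _ _).trans (max_le ?_ ?_)).trans_lt hD
  · exact natDegree_mul_le_of_le le_rfl (natDegree_pow_le_of_le 2 hr)
  · exact (natDegree_C_mul_le _ _).trans ((natDegree_pow_le_of_le 2 hs).trans (by omega))

lemma eq_zero_of_sum_mul_X_pow_eq_zero (hf : Squarefree f) (hd : 0 < f.natDegree)
    (hf0 : f.eval 0 ≠ 0) (hc : 2 * c + 1 = Fintype.card F)
    (hD : f.natDegree + 2 * D < Fintype.card F) :
    ∀ {J : ℕ} {r s : Fin J → F[X]}, (∀ j, (r j).natDegree ≤ D) → (∀ j, (s j).natDegree ≤ D) →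
      ∑ j, (r j + s j * f ^ c) * X ^ ((j : ℕ) * Fintype.card F) = 0 →
      ∀ j, r j = 0 ∧ s j = 0
  | 0, _, _, _, _, _ => fun j => j.elim0
  | J + 1, r, s, hr, hs, h => by
    have hsplit : r 0 + s 0 * f ^ c + X ^ Fintype.card F *
        ∑ j : Fin J, (r j.succ + s j.succ * f ^ c) * X ^ ((j : ℕ) * Fintype.card F) = 0 := by
      rw [← h, Fin.sum_univ_succ, Finset.mul_sum]
      congr 1
      · simp
      · refine Finset.sum_congr rfl fun j _ => ?_
        rw [Fin.val_succ, add_mul _ 1, one_mul, pow_add]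
        ring
    have hhead : r 0 = 0 ∧ s 0 = 0 := by
      refine eq_zero_of_add_mul_pow_eq_zero hf hd hf0 hc hD (hr 0) (hs 0)
        (A := ∑ j : Fin J, r j.succ * X ^ ((j : ℕ) * Fintype.card F))
        (B := ∑ j : Fin J, s j.succ * X ^ ((j : ℕ) * Fintype.card F)) ?_
      simp only [add_mul _ _ (X ^ _), mul_right_comm _ (f ^ c), Finset.sum_add_distrib,
        ← Finset.sum_mul] at hsplit
      linear_combination hsplit
    have htail := eq_zero_of_sum_mul_X_pow_eq_zero hf hd hf0 hc hD
      (fun j => hr (Fin.succ j)) (fun j => hs (Fin.succ j)) (by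
        simpa [hhead.1, hhead.2] using hsplit)
    exact Fin.cases hhead htail

end Nonvanishing

section WeightedDegree

variable {R : Type*} [Semiring R] {s d e : ℕ} {p p' : R[X][X]}

/-- The `k`-th coefficient of `p`, a polynomial in the inner variable, has degree at most
`d + k * s`. -/
def WeightedDegreeLE (s d : ℕ) (p : R[X][X]) : Prop :=
  ∀ k, (p.coeff k).natDegree ≤ d + k * s

namespace WeightedDegreeLE

lemma mono (h : WeightedDegreeLE s d p) (hde : d ≤ e) : WeightedDegreeLE s e p :=
  fun k => (h k).trans (by omega)

lemma add (h : WeightedDegreeLE s d p) (h' : WeightedDegreeLE s d p') :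
    WeightedDegreeLE s d (p + p') := fun k => by
  rw [coeff_add]
  exact (natDegree_add_le _ _).trans (max_le (h k) (h' k))

lemma sum {ι : Type*} {t : Finset ι} {p : ι → R[X][X]} (h : ∀ i ∈ t, WeightedDegreeLE s d (p i)) :
    WeightedDegreeLE s d (∑ i ∈ t, p i) := fun k => by
  rw [finsetSum_coeff]
  exact natDegree_sum_le_of_forall_le _ _ fun i hi => h i hi k

lemma mul (h : WeightedDegreeLE s d p) (h' : WeightedDegreeLE s e p') :
    WeightedDegreeLE s (d + e) (p * p') := fun k => by
  rw [coeff_mul]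
  refine natDegree_sum_le_of_forall_le _ _ fun ij hij => ?_
  rw [← Finset.HasAntidiagonal.mem_antidiagonal.1 hij]
  exact (natDegree_mul_le_of_le (h _) (h' _)).trans (by ring_nf; rfl)

lemma smul {c : R} (h : WeightedDegreeLE s d p) : WeightedDegreeLE s d (c • p) := fun k => by
  rw [coeff_smul]
  exact (natDegree_smul_le _ _).trans (h k)

lemma C_of_natDegree_le {a : R[X]} (h : a.natDegree ≤ d) : WeightedDegreeLE s d (C a) := fun k => by
  rw [coeff_C]
  split_ifs
  · exact h.trans (Nat.le_add_right _ _)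
  · simp

lemma pow (h : WeightedDegreeLE s d p) : ∀ n : ℕ, WeightedDegreeLE s (n * d) (p ^ n)
  | 0 => by simpa using C_of_natDegree_le (s := s) (natDegree_one (R := R)).le
  | n + 1 => by rw [pow_succ, Nat.succ_mul]; exact (h.pow n).mul h

end WeightedDegreeLE

end WeightedDegree

section GenericPoint

/-- The generic point `X + T f(X)`, as a polynomial in `T` over `R[X]`; at `X = x` it parametrizes
the line when `f x ≠ 0`, and Stepanov's polynomial is expanded there in powers of `T`. -/
def genericPoint {R : Type*} [CommSemiring R] (f : R[X]) : R[X][X] := C X + X * C f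

lemma weightedDegreeLE_genericPoint {R : Type*} [CommSemiring R] {f : R[X]}
    (hd : 0 < f.natDegree) : WeightedDegreeLE (f.natDegree - 1) 1 (genericPoint f) := by
  rintro (_ | _ | k) <;> simp only [genericPoint, coeff_add, coeff_X_mul, coeff_C]
  · simp [natDegree_X_le]
  · simp
    omega
  · simp

lemma weightedDegreeLE_aeval_genericPoint {R : Type*} [CommSemiring R] {f : R[X]}
    (hd : 0 < f.natDegree) {r : R[X]} {D : ℕ} (hr : r.natDegree ≤ D) :
    WeightedDegreeLE (f.natDegree - 1) D (aeval (genericPoint f) r) := by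
  rw [aeval_eq_sum_range]
  refine .sum fun i hi => ((weightedDegreeLE_genericPoint hd).pow i).smul.mono ?_
  have := Finset.mem_range.1 hi
  omega

/-- Taylor's formula at the generic point: every coefficient of `f(X + T f(X))` is divisible
by `f(X)`. -/
lemma C_dvd_aeval_genericPoint {R : Type*} [CommRing R] (f : R[X]) :
    C f ∣ aeval (genericPoint f) f := by
  have hsub : genericPoint f - C X ∣ aeval (genericPoint f) f - aeval (C X : R[X][X]) f := by
    simpa only [aeval_def, eval₂_eq_eval_map] using sub_dvd_eval_sub _ _ _
  have hconst : aeval (C X : R[X][X]) f = C f := by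
    simpa using aeval_algebraMap_apply R[X][X] (X : R[X]) f
  have hdvd : C f ∣ genericPoint f - C X := ⟨X, by rw [genericPoint, add_sub_cancel_left, mul_comm]⟩
  rw [hconst] at hsub
  exact (dvd_sub_left dvd_rfl).1 (hdvd.trans hsub)

lemma exists_aeval_genericPoint_eq_C_mul {R : Type*} [CommRing R] [IsDomain R] {f : R[X]}
    (hd : 0 < f.natDegree) :
    ∃ u : R[X][X], aeval (genericPoint f) f = C f * u ∧
      WeightedDegreeLE (f.natDegree - 1) 0 u := by
  obtain ⟨u, hu⟩ := C_dvd_aeval_genericPoint f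
  refine ⟨u, hu, fun k => ?_⟩
  have hk := weightedDegreeLE_aeval_genericPoint hd (le_refl f.natDegree) k
  rw [hu, coeff_C_mul] at hk
  obtain h0 | h0 := eq_or_ne (u.coeff k) 0
  · simp [h0]
  · rw [natDegree_mul (ne_zero_of_natDegree_gt hd) h0] at hk
    omega

lemma mapRingHom_eval_aeval_genericPoint {R : Type*} [CommRing R] (f r : R[X]) (x : R) :
    mapRingHom (evalRingHom x) (aeval (genericPoint f) r) = r.comp (C x + C (f.eval x) * X) := by
  rw [aeval_def, hom_eval₂, comp]
  congr 1
  · ext z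
    simp [Polynomial.algebraMap_apply]
  · simp [genericPoint]

lemma X_sub_C_pow_dvd_of_comp {K : Type*} [Field K] {p : K[X]} {x e : K} (he : e ≠ 0) {l : ℕ}
    (h : X ^ l ∣ p.comp (C x + C e * X)) : (X - C x) ^ l ∣ p := by
  obtain ⟨s, hs⟩ := h
  have hinv : C x + C e * (C e⁻¹ * (X - C x)) = X := by
    rw [← mul_assoc, ← C_mul, mul_inv_cancel₀ he]; simp
  have hcomp := congrArg (comp · (C e⁻¹ * (X - C x))) hs
  simp only [comp_assoc, mul_comp, add_comp, C_comp, X_comp, pow_comp, hinv, comp_X,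
    mul_pow] at hcomp
  exact ⟨C e⁻¹ ^ l * s.comp (C e⁻¹ * (X - C x)), by rw [hcomp]; ring⟩

end GenericPoint

section AuxiliaryPolynomial

variable {F : Type*} [Field F] {f : F[X]} {u : F[X][X]} {c J D l : ℕ} {a : F}

/-- Unknown coefficients `(r, s)` of Stepanov's auxiliary polynomial. -/
abbrev StepanovCoeffs (F : Type*) [Field F] (J D : ℕ) : Type _ :=
  (Fin J → degreeLT F D) × (Fin J → degreeLT F D)

lemma natDegree_le_of_degreeLT (p : degreeLT F D) : (p : F[X]).natDegree ≤ D :=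
  natDegree_le_of_degree_le (mem_degreeLT.1 p.2).le

/-- Stepanov's auxiliary polynomial `∑ j, (r j + s j * f ^ c) * X ^ (j * q)`. -/
def stepanovPoly (f : F[X]) (c q : ℕ) (v : StepanovCoeffs F J D) : F[X] :=
  ∑ j : Fin J, ((v.1 j : F[X]) + (v.2 j : F[X]) * f ^ c) * X ^ ((j : ℕ) * q)

/-- The expansion of `stepanovPoly f c q v` at the generic point, simplified by `f x ^ c = a` and
`x ^ q = x`, with `u = f(X + T f(X)) / f(X)`. -/
def stepanovExpansion (f : F[X]) (u : F[X][X]) (c : ℕ) (a : F) :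
    StepanovCoeffs F J D →ₗ[F] F[X][X] where
  toFun v := ∑ j : Fin J, (aeval (genericPoint f) (v.1 j : F[X]) +
    aeval (genericPoint f) (v.2 j : F[X]) * (C (C a) * u ^ c)) * C (X ^ (j : ℕ))
  map_add' v w := by
    rw [← Finset.sum_add_distrib]
    refine Finset.sum_congr rfl fun j _ => ?_
    simp only [Prod.fst_add, Prod.snd_add, Pi.add_apply, Submodule.coe_add, map_add]
    ring
  map_smul' t v := by
    rw [RingHom.id_apply, Finset.smul_sum]
    refine Finset.sum_congr rfl fun j _ => ?_
    simp only [Prod.smul_fst, Prod.smul_snd, Pi.smul_apply, Submodule.coe_smul, map_smul,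
      smul_mul_assoc, ← smul_add]

lemma stepanovExpansion_apply (f : F[X]) (u : F[X][X]) (c : ℕ) (a : F) (v : StepanovCoeffs F J D) :
    stepanovExpansion f u c a v = ∑ j : Fin J, (aeval (genericPoint f) (v.1 j : F[X]) +
      aeval (genericPoint f) (v.2 j : F[X]) * (C (C a) * u ^ c)) * C (X ^ (j : ℕ)) :=
  rfl

lemma weightedDegreeLE_stepanovExpansion (hd : 0 < f.natDegree)
    (hu : WeightedDegreeLE (f.natDegree - 1) 0 u) (c : ℕ) (a : F) (v : StepanovCoeffs F J D) :
    WeightedDegreeLE (f.natDegree - 1) (D + J) (stepanovExpansion f u c a v) := by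
  have haeval (p : degreeLT F D) :
      WeightedDegreeLE (f.natDegree - 1) D (aeval (genericPoint f) (p : F[X])) :=
    weightedDegreeLE_aeval_genericPoint hd (natDegree_le_of_degreeLT p)
  have hconst : WeightedDegreeLE (f.natDegree - 1) 0 (C (C a) * u ^ c) := by
    simpa using (WeightedDegreeLE.C_of_natDegree_le (natDegree_C a).le).mul (hu.pow c)
  rw [stepanovExpansion_apply]
  refine .sum fun j _ => .mul ((haeval _).add ((haeval _).mul hconst)) ?_
  exact .C_of_natDegree_le ((natDegree_X_pow_le _).trans j.2.le)

lemma exists_stepanovExpansion_coeff_eq_zero (hd : 0 < f.natDegree)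
    (hu : WeightedDegreeLE (f.natDegree - 1) 0 u) (c : ℕ) (a : F)
    (hcount : l * (D + J + l * f.natDegree) < 2 * J * D) :
    ∃ v : StepanovCoeffs F J D, v ≠ 0 ∧ ∀ k < l, (stepanovExpansion f u c a v).coeff k = 0 := by
  set M := D + J + l * f.natDegree
  let conditions : StepanovCoeffs F J D →ₗ[F] (Fin l → Fin M → F) :=
    LinearMap.pi fun k => LinearMap.pi fun n =>
      lcoeff F n ∘ₗ (lcoeff F[X] k).restrictScalars F ∘ₗ stepanovExpansion f u c a
  have hker : LinearMap.ker conditions ≠ ⊥ := by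
    apply LinearMap.ker_ne_bot_of_finrank_lt
    have hfin : Module.finrank F (degreeLT F D) = D := by
      rw [(degreeLTEquiv F D).finrank_eq]; simp
    simp only [Module.finrank_prod, Module.finrank_pi_fintype, hfin, Finset.sum_const,
      Finset.card_univ, Fintype.card_fin, smul_eq_mul, Module.finrank_self, mul_one]
    linarith
  obtain ⟨v, hv, hv0⟩ := Submodule.exists_mem_ne_zero_of_ne_bot hker
  refine ⟨v, hv0, fun k hk => ?_⟩
  ext n
  obtain hn | hn := lt_or_ge n M
  · exact congrFun (congrFun (LinearMap.mem_ker.1 hv) ⟨k, hk⟩) ⟨n, hn⟩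
  · rw [coeff_zero]
    refine coeff_eq_zero_of_natDegree_lt
      ((weightedDegreeLE_stepanovExpansion hd hu c a v k).trans_lt (lt_of_lt_of_le ?_ hn))
    have : k * (f.natDegree - 1) < l * f.natDegree :=
      Nat.mul_lt_mul_of_lt_of_le hk (Nat.sub_le _ _) hd
    omega

lemma natDegree_stepanovPoly_le (f : F[X]) (c q : ℕ) (v : StepanovCoeffs F J D) :
    (stepanovPoly f c q v).natDegree ≤ D + c * f.natDegree + J * q := by
  refine natDegree_sum_le_of_forall_le _ _ fun j _ => natDegree_mul_le_of_le ?_ ?_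
  · refine (natDegree_add_le _ _).trans (max_le ((natDegree_le_of_degreeLT _).trans ?_) ?_)
    · exact Nat.le_add_right _ _
    · exact natDegree_mul_le_of_le (natDegree_le_of_degreeLT _) natDegree_pow_le
  · exact (natDegree_X_pow_le _).trans (Nat.mul_le_mul_right _ j.2.le)

lemma stepanovPoly_ne_zero [Fintype F] (hf : Squarefree f) (hd : 0 < f.natDegree)
    (hf0 : f.eval 0 ≠ 0) (hc : 2 * c + 1 = Fintype.card F)
    (hD : f.natDegree + 2 * D < Fintype.card F) {v : StepanovCoeffs F J D} (hv : v ≠ 0) :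
    stepanovPoly f c (Fintype.card F) v ≠ 0 := by
  refine mt (fun h => ?_) hv
  have hzero := eq_zero_of_sum_mul_X_pow_eq_zero hf hd hf0 hc hD
    (fun j => natDegree_le_of_degreeLT (v.1 j)) (fun j => natDegree_le_of_degreeLT (v.2 j)) h
  exact Prod.ext (funext fun j => Subtype.ext (hzero j).1) (funext fun j => Subtype.ext (hzero j).2)

lemma X_pow_dvd_stepanovPoly_comp_sub [Fintype F] (hu : aeval (genericPoint f) f = C f * u)
    (hl : l ≤ Fintype.card F) {x : F} (hx : f.eval x ^ c = a) (v : StepanovCoeffs F J D) :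
    X ^ l ∣ (stepanovPoly f c (Fintype.card F) v).comp (C x + C (f.eval x) * X) -
      mapRingHom (evalRingHom x) (stepanovExpansion f u c a v) := by
  set line := C x + C (f.eval x) * X with hline
  set ev := mapRingHom (evalRingHom x)
  have hev (r : F[X]) : ev (aeval (genericPoint f) r) = r.comp line :=
    mapRingHom_eval_aeval_genericPoint f r x
  have hfc : f.comp line ^ c = C a * ev u ^ c := by
    rw [← hev, hu, map_mul, mul_pow, ← hx, C_pow]
    simp [ev]
  have hfrob : line ^ Fintype.card F = C x + C (f.eval x) * X ^ Fintype.card F := by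
    rw [← FiniteField.expand_card]; simp [hline]
  have hline_pow (j : ℕ) : X ^ l ∣ line ^ (j * Fintype.card F) - C x ^ j := by
    rw [mul_comm, pow_mul]
    refine Dvd.dvd.trans ?_ (sub_dvd_pow_sub_pow _ _ _)
    rw [hfrob, add_sub_cancel_left]
    exact (pow_dvd_pow _ hl).mul_left _
  rw [stepanovPoly, stepanovExpansion_apply, map_sum, sum_comp,
    ← Finset.sum_sub_distrib]
  refine Finset.dvd_sum fun j _ => ?_
  have hconst : ev (C (C a)) = C a ∧ ev (C X) = C x := by simp [ev]
  simp only [mul_comp, add_comp, pow_comp, X_comp, map_mul, map_add, map_pow, hev, hfc,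
    hconst.1, hconst.2, ← mul_sub]
  exact (hline_pow j).mul_left _

theorem mul_card_eval_pow_eq_le [Fintype F] (hf : Squarefree f) (hd : 0 < f.natDegree)
    (hf0 : f.eval 0 ≠ 0) (hc : 2 * c + 1 = Fintype.card F)
    (hD : f.natDegree + 2 * D < Fintype.card F) (hl : l ≤ Fintype.card F)
    (hcount : l * (D + J + l * f.natDegree) < 2 * J * D) (a : F) :
    l * (Finset.univ.filter fun x : F => f.eval x ≠ 0 ∧ f.eval x ^ c = a).card ≤
      D + c * f.natDegree + J * Fintype.card F := by
  obtain ⟨u, hu, hW⟩ := exists_aeval_genericPoint_eq_C_mul hd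
  obtain ⟨v, hv0, hv⟩ := exists_stepanovExpansion_coeff_eq_zero hd hW c a hcount
  set S := Finset.univ.filter fun x : F => f.eval x ≠ 0 ∧ f.eval x ^ c = a
  have hdvd : ∀ x ∈ S, (X - C x) ^ l ∣ stepanovPoly f c (Fintype.card F) v := by
    intro x hx
    obtain ⟨hx0, hxa⟩ := (Finset.mem_filter.1 hx).2
    refine X_sub_C_pow_dvd_of_comp hx0
      ((dvd_iff_dvd_of_dvd_sub (X_pow_dvd_stepanovPoly_comp_sub hu hl hxa v)).2 ?_)
    exact X_pow_dvd_iff.2 fun k hk => by simp [coeff_map, hv k hk]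
  have hprod : ∏ x ∈ S, (X - C x) ^ l ∣ stepanovPoly f c (Fintype.card F) v :=
    Finset.prod_dvd_of_coprime (fun x _ y _ hxy =>
      (isCoprime_X_sub_C_of_isUnit_sub (sub_ne_zero.2 hxy).isUnit).pow) hdvd
  calc l * S.card = (∏ x ∈ S, (X - C x) ^ l).natDegree := by
        rw [natDegree_prod _ _ fun x _ => pow_ne_zero _ (X_sub_C_ne_zero x)]
        simp [mul_comm]
    _ ≤ (stepanovPoly f c (Fintype.card F) v).natDegree :=
        natDegree_le_of_dvd hprod (stepanovPoly_ne_zero hf hd hf0 hc hD hv0)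
    _ ≤ _ := natDegree_stepanovPoly_le f c _ v

end AuxiliaryPolynomial

section CharSum

variable {F : Type*} [Field F] [Fintype F] {f : F[X]} {m L : ℕ}

/-- The complete quadratic character sum of the polynomial `f`. -/
def charSum (f : F[X]) : ℤ := ∑ x, quadraticChar F (f.eval x)

/-- The choice of parameters `l = 2L`, `J = L + 1`, `D = (q - m - 1) / 2` in Stepanov's method. -/
lemma four_mul_card_eval_pow_eq_le (hf : Squarefree f) (hd : 0 < f.natDegree)
    (hf0 : f.eval 0 ≠ 0) (hm : f.natDegree ≤ m) (hodd : Fintype.card F % 2 = 1)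
    (hq : 2 * (L * (L + 1 + 2 * L * m)) + m + 4 + 2 * L < Fintype.card F) (a : F) :
    4 * L * (Finset.univ.filter fun x : F =>
      f.eval x ≠ 0 ∧ f.eval x ^ (Fintype.card F / 2) = a).card ≤
      Fintype.card F * (m + 3 + 2 * L) := by
  set q := Fintype.card F
  have hdegL : 2 * L * f.natDegree ≤ 2 * L * m := Nat.mul_le_mul_left _ hm
  have hcount : 2 * L * ((q - m - 1) / 2 + (L + 1) + 2 * L * f.natDegree) <
      2 * (L + 1) * ((q - m - 1) / 2) := by
    have hlarge : L * (L + 1 + 2 * L * m) < (q - m - 1) / 2 := by omega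
    nlinarith
  have hbound := mul_card_eval_pow_eq_le (c := q / 2) hf hd hf0 (by omega) (by omega) (by omega)
    hcount a
  have hdegq : q / 2 * f.natDegree ≤ q / 2 * m := Nat.mul_le_mul_left _ hm
  have hhalf : 2 * (q / 2 * m) ≤ q * m := by
    rw [← mul_assoc]
    exact Nat.mul_le_mul_right _ (Nat.mul_div_le q 2)
  have hD : 2 * ((q - m - 1) / 2) ≤ q := by omega
  linarith

lemma card_eval_eq_zero_le (hf : f ≠ 0) :
    (Finset.univ.filter fun x : F => f.eval x = 0).card ≤ f.natDegree :=
  card_le_degree_of_subset_roots fun x hx => by simpa [hf] using hx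

lemma sign_mul_quadraticChar (hF : ringChar F ≠ 2) {σ : ℤ} (hσ : σ = 1 ∨ σ = -1) (y : F) :
    σ * quadraticChar F y =
      2 * (if y ≠ 0 ∧ y ^ (Fintype.card F / 2) = (σ : F) then 1 else 0) - 1 +
        (if y = 0 then 1 else 0) := by
  have hne : (1 : F) ≠ -1 := (Ring.neg_one_ne_one_of_char_ne_two hF).symm
  obtain rfl | hy := eq_or_ne y 0
  · simp
  · have hpow := quadraticChar_eq_pow_of_char_ne_two' hF y
    obtain h | h := quadraticChar_dichotomy hy <;> obtain rfl | rfl := hσ <;>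
      rw [h] at hpow <;> simp [h, hy, ← hpow, hne, hne.symm]

lemma ringChar_ne_two_of_card_odd (hodd : Fintype.card F % 2 = 1) : ringChar F ≠ 2 := fun h => by
  have := FiniteField.even_card_iff_char_two.1 h
  omega

lemma two_mul_abs_charSum_le_of_eval_ne_zero (hf : Squarefree f) (hd : 0 < f.natDegree)
    (hf0 : f.eval 0 ≠ 0) (hm : f.natDegree ≤ m) (hodd : Fintype.card F % 2 = 1)
    (hq : 2 * (L * (L + 1 + 2 * L * m)) + m + 4 + 2 * L < Fintype.card F) :
    2 * L * |charSum f| ≤ Fintype.card F * (m + 3) + 2 * L * m := by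
  have hsign : ∀ σ : ℤ, σ = 1 ∨ σ = -1 →
      2 * L * (σ * charSum f) ≤ Fintype.card F * (m + 3) + 2 * L * m := by
    intro σ hσ
    have hsum : σ * charSum f =
        2 * ((Finset.univ.filter fun x : F =>
          f.eval x ≠ 0 ∧ f.eval x ^ (Fintype.card F / 2) = (σ : F)).card : ℤ) - Fintype.card F +
        (Finset.univ.filter fun x : F => f.eval x = 0).card := by
      rw [charSum, Finset.mul_sum, Finset.sum_congr rfl fun x _ => sign_mul_quadraticChar
        (ringChar_ne_two_of_card_odd hodd) hσ (f.eval x), Finset.sum_add_distrib,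
        Finset.sum_sub_distrib, ← Finset.mul_sum, Finset.sum_boole, Finset.sum_boole]
      simp
    have hpow := four_mul_card_eval_pow_eq_le hf hd hf0 hm hodd hq (σ : F)
    have hzero := (card_eval_eq_zero_le (ne_zero_of_natDegree_gt hd)).trans hm
    zify at hpow hzero
    rw [hsum]
    nlinarith
  obtain h | h := abs_choice (charSum f) <;> rw [h]
  · simpa using hsign 1 (Or.inl rfl)
  · simpa using hsign (-1) (Or.inr rfl)

lemma squarefree_taylor {R : Type*} [CommRing R] {f : R[X]} (hf : Squarefree f) (r : R) :
    Squarefree (taylor r f) := fun g hg => by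
  have hdvd := map_dvd (taylorEquiv r).symm hg
  rw [map_mul, show (taylorEquiv r).symm (taylor r f) = f from
    (taylorEquiv r).symm_apply_apply f] at hdvd
  exact (MulEquiv.isUnit_map (taylorEquiv r).symm).1 (hf _ hdvd)

lemma charSum_taylor (f : F[X]) (r : F) : charSum (taylor r f) = charSum f := by
  simp only [charSum, taylor_eval]
  exact Equiv.sum_comp (Equiv.addRight r) fun x => quadraticChar F (f.eval x)

lemma two_mul_abs_charSum_le (hf : Squarefree f) (hd : 0 < f.natDegree) (hm : f.natDegree ≤ m)
    (hodd : Fintype.card F % 2 = 1)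
    (hq : 2 * (L * (L + 1 + 2 * L * m)) + m + 4 + 2 * L < Fintype.card F) :
    2 * L * |charSum f| ≤ Fintype.card F * (m + 3) + 2 * L * m := by
  obtain ⟨r, hr⟩ : ∃ r, f.eval r ≠ 0 := by
    by_contra! hzero
    exact ne_zero_of_natDegree_gt hd (eq_zero_of_natDegree_lt_card_of_eval_eq_zero f
      Function.injective_id hzero (by omega))
  rw [← charSum_taylor f r]
  exact two_mul_abs_charSum_le_of_eval_ne_zero (squarefree_taylor hf r)
    (by simpa using hd) (by simpa [taylor_eval] using hr) (by simpa using hm) hodd hq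

end CharSum

end Stepanov

/-- Stepanov's method with `L` parameters saves a factor of order `L` over the trivial bound. -/
theorem exists_forall_abs_charSum_le.{u} (m : ℕ) {ε : ℝ} (hε : 0 < ε) :
    ∃ N : ℕ, ∀ (F : Type u) [Field F] [Fintype F], N < Fintype.card F →
      Fintype.card F % 2 = 1 → ∀ f : F[X], Squarefree f → 0 < f.natDegree → f.natDegree ≤ m →
        |(charSum f : ℝ)| ≤ ε * Fintype.card F := by
  obtain ⟨L, hL⟩ := exists_nat_gt ((m + 3) / ε)
  obtain ⟨N, hN⟩ := exists_nat_gt (2 * m / ε)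
  refine ⟨N + (2 * (L * (L + 1 + 2 * L * m)) + m + 4 + 2 * L), ?_⟩
  intro F _ _ hq hodd f hf hd hm
  have hL0 : (0 : ℝ) < L := lt_of_le_of_lt (by positivity) hL
  have hbound : 2 * (L : ℝ) * |(charSum f : ℝ)| ≤ Fintype.card F * (m + 3) + 2 * L * m := by
    exact_mod_cast two_mul_abs_charSum_le (L := L) hf hd hm hodd (by omega)
  have hNq : (N : ℝ) ≤ Fintype.card F := by exact_mod_cast (by omega : N ≤ Fintype.card F)
  rw [div_lt_iff₀ hε] at hL hN
  have hzeros : (2 * m : ℝ) ≤ Fintype.card F * ε := hN.le.trans (by gcongr)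
  refine le_of_mul_le_mul_left (hbound.trans ?_) (by positivity : 0 < 2 * (L : ℝ))
  calc (Fintype.card F * (m + 3) + 2 * L * m : ℝ) = Fintype.card F * (m + 3) + L * (2 * m) := by
        ring
    _ ≤ Fintype.card F * (L * ε) + L * (Fintype.card F * ε) :=
        add_le_add (by gcongr) (mul_le_mul_of_nonneg_left hzeros hL0.le)
    _ = 2 * L * (ε * Fintype.card F) := by ring

section SignVectors

/-- Whether `z` is a square; `true` for squares, in particular for `0`. -/
def squareClass {F : Type*} [Field F] (z : F) : Bool := decide (IsSquare z)

lemma squareClass_eq_true_iff {F : Type*} [Field F] {z : F} :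
    squareClass z = true ↔ IsSquare z :=
  decide_eq_true_iff

/-- The value `1` or `-1` of the quadratic character on a square class. -/
def classSign (b : Bool) : ℤ := if b then 1 else -1

lemma quadraticChar_eq_classSign {F : Type*} [Field F] [Fintype F] {z : F} (hz : z ≠ 0) :
    quadraticChar F z = classSign (squareClass z) := by
  simp [quadraticChar_apply, quadraticCharFun, hz, classSign, squareClass]

lemma classSign_injective : Function.Injective classSign := by decide

lemma squareClass_mul {F : Type*} [Field F] [Finite F] {y z : F} (hy : y ≠ 0) (hz : z ≠ 0) :
    squareClass (y * z) = (squareClass y == squareClass z) := by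
  have := Fintype.ofFinite F
  apply classSign_injective
  rw [← quadraticChar_eq_classSign (mul_ne_zero hy hz), map_mul, quadraticChar_eq_classSign hy,
    quadraticChar_eq_classSign hz]
  cases squareClass y <;> cases squareClass z <;> rfl

variable {ι Ω F : Type*} [Fintype ι] [Field F] [Fintype F]

/-- Up to the points where some `f k` vanishes, `2 ^ |ι|` times the indicator function of the
points at which `f` has sign vector `v`. -/
def signWeight (f : ι → Ω → F) (v : ι → Bool) (p : Ω) : ℤ :=
  ∏ k, (1 + classSign (v k) * quadraticChar F (f k p))

lemma abs_signWeight_sub_le (f : ι → Ω → F) (v : ι → Bool) (p : Ω) :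
    |signWeight f v p - 2 ^ Fintype.card ι *
        (if (∀ k, f k p ≠ 0) ∧ (fun k => squareClass (f k p)) = v then 1 else 0)| ≤
      2 ^ Fintype.card ι * (if ∃ k, f k p = 0 then 1 else 0) := by
  by_cases hp : ∃ k, f k p = 0
  · have hfactor (k : ι) : 0 ≤ 1 + classSign (v k) * quadraticChar F (f k p) ∧
        1 + classSign (v k) * quadraticChar F (f k p) ≤ 2 := by
      obtain h | h := eq_or_ne (f k p) 0
      · simp [h]
      · rw [quadraticChar_eq_classSign h]
        cases v k <;> cases squareClass (f k p) <;> decide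
    have hnot : ¬∀ k, f k p ≠ 0 := by simpa using hp
    rw [if_neg (fun h => hnot h.1), if_pos hp, mul_zero, sub_zero, mul_one, signWeight,
      abs_of_nonneg (Finset.prod_nonneg fun k _ => (hfactor k).1)]
    exact (Finset.prod_le_prod (fun k _ => (hfactor k).1) fun k _ => (hfactor k).2).trans (by simp)
  · rw [if_neg hp, mul_zero, abs_nonpos_iff, sub_eq_zero]
    push Not at hp
    obtain rfl | hv := eq_or_ne (fun k => squareClass (f k p)) v
    · rw [if_pos ⟨hp, rfl⟩, mul_one, signWeight, Finset.prod_congr rfl (g := fun _ => 2)]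
      · simp
      · intro k _
        rw [quadraticChar_eq_classSign (hp k)]
        cases squareClass (f k p) <;> rfl
    · obtain ⟨k, hk⟩ := Function.ne_iff.1 hv
      rw [if_neg fun h => hv h.2, mul_zero]
      refine Finset.prod_eq_zero (Finset.mem_univ k) ?_
      rw [quadraticChar_eq_classSign (hp k)]
      revert hk
      cases squareClass (f k p) <;> cases v k <;> simp [classSign]

variable [Fintype Ω] {f : ι → Ω → F} {δ : ℝ}

lemma sum_signWeight (f : ι → Ω → F) (v : ι → Bool) :
    ∑ p, signWeight f v p = ∑ S : Finset ι,
      (∏ k ∈ S, classSign (v k)) * ∑ p, ∏ k ∈ S, quadraticChar F (f k p) := by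
  simp only [signWeight, Finset.prod_one_add, Finset.powerset_univ, Finset.prod_mul_distrib,
    Finset.mul_sum]
  exact Finset.sum_comm

lemma abs_sum_signWeight_sub_le
    (hδ : ∀ S : Finset ι, S.Nonempty → |((∑ p, ∏ k ∈ S, quadraticChar F (f k p) : ℤ) : ℝ)| ≤ δ)
    (hδ0 : 0 ≤ δ) (v : ι → Bool) :
    |((∑ p, signWeight f v p : ℤ) : ℝ) - Fintype.card Ω| ≤ 2 ^ Fintype.card ι * δ := by
  rw [sum_signWeight, ← Finset.add_sum_erase _ _ (Finset.mem_univ ∅)]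
  push_cast
  simp only [Finset.prod_empty, Finset.sum_const, Finset.card_univ, nsmul_eq_mul, mul_one, one_mul,
    add_sub_cancel_left]
  calc _ ≤ ∑ _S ∈ Finset.univ.erase (∅ : Finset ι), δ := by
        refine (Finset.abs_sum_le_sum_abs _ _).trans (Finset.sum_le_sum fun S hS => ?_)
        have hsign : |∏ k ∈ S, (classSign (v k) : ℝ)| = 1 := by
          rw [Finset.abs_prod]
          exact Finset.prod_eq_one fun k _ => by cases v k <;> simp [classSign]
        rw [abs_mul, hsign, one_mul]
        exact_mod_cast hδ S (Finset.nonempty_iff_ne_empty.2 (Finset.ne_of_mem_erase hS))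
    _ ≤ ∑ _S : Finset ι, δ :=
        Finset.sum_le_sum_of_subset_of_nonneg (Finset.erase_subset _ _) fun _ _ _ => hδ0
    _ = 2 ^ Fintype.card ι * δ := by simp

lemma abs_two_pow_mul_card_signs_eq_sub_le
    (hδ : ∀ S : Finset ι, S.Nonempty → |((∑ p, ∏ k ∈ S, quadraticChar F (f k p) : ℤ) : ℝ)| ≤ δ)
    (hδ0 : 0 ≤ δ) (v : ι → Bool) :
    |(2 : ℝ) ^ Fintype.card ι * (Finset.univ.filter fun p =>
        (∀ k, f k p ≠ 0) ∧ (fun k => squareClass (f k p)) = v).card - Fintype.card Ω| ≤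
      2 ^ Fintype.card ι * (δ + (Finset.univ.filter fun p => ∃ k, f k p = 0).card) := by
  have hweight : |((∑ p, signWeight f v p : ℤ) : ℝ) - 2 ^ Fintype.card ι *
      (Finset.univ.filter fun p =>
        (∀ k, f k p ≠ 0) ∧ (fun k => squareClass (f k p)) = v).card| ≤
      2 ^ Fintype.card ι * (Finset.univ.filter fun p => ∃ k, f k p = 0).card := by
    have h := (Finset.abs_sum_le_sum_abs _ _).trans
      (Finset.sum_le_sum fun p (_ : p ∈ Finset.univ) => abs_signWeight_sub_le f v p)
    simp only [Finset.sum_sub_distrib, ← Finset.mul_sum, Finset.sum_boole] at h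
    exact_mod_cast h
  have hsum := abs_sum_signWeight_sub_le hδ hδ0 v
  rw [abs_le] at *
  constructor <;> linarith [hweight.1, hweight.2, hsum.1, hsum.2]

/-- If all nonempty products of the `f k` have small character sums, then their sign vectors are
equidistributed. -/
theorem abs_card_signs_mem_sub_le
    (hδ : ∀ S : Finset ι, S.Nonempty → |((∑ p, ∏ k ∈ S, quadraticChar F (f k p) : ℤ) : ℝ)| ≤ δ)
    (hδ0 : 0 ≤ δ) (Φ : Finset (ι → Bool)) :
    |((Finset.univ.filter fun p =>
        (∀ k, f k p ≠ 0) ∧ (fun k => squareClass (f k p)) ∈ Φ).card : ℝ) -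
        Φ.card / 2 ^ Fintype.card ι * Fintype.card Ω| ≤
      Φ.card * (δ + (Finset.univ.filter fun p => ∃ k, f k p = 0).card) := by
  have hfiber : ((Finset.univ.filter fun p =>
      (∀ k, f k p ≠ 0) ∧ (fun k => squareClass (f k p)) ∈ Φ).card : ℝ) =
      ∑ v ∈ Φ, ((Finset.univ.filter fun p =>
        (∀ k, f k p ≠ 0) ∧ (fun k => squareClass (f k p)) = v).card : ℝ) := by
    rw [← Nat.cast_sum, Finset.card_eq_sum_card_fiberwise (t := Φ)
      (f := fun p k => squareClass (f k p)) fun p hp => (Finset.mem_filter.1 hp).2.2]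
    refine congrArg _ (Finset.sum_congr rfl fun v hv => congrArg _ ?_)
    ext p
    simp only [Finset.mem_filter, Finset.mem_univ, true_and]
    exact ⟨fun h => ⟨h.1.1, h.2⟩, fun h => ⟨⟨h.1, h.2 ▸ hv⟩, h.2⟩⟩
  have hmean : (Φ.card : ℝ) / 2 ^ Fintype.card ι * Fintype.card Ω =
      ∑ _v ∈ Φ, (Fintype.card Ω : ℝ) / 2 ^ Fintype.card ι := by
    rw [Finset.sum_const, nsmul_eq_mul]
    ring
  rw [hfiber, hmean, ← Finset.sum_sub_distrib, ← nsmul_eq_mul, ← Finset.sum_const]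
  refine (Finset.abs_sum_le_sum_abs _ _).trans (Finset.sum_le_sum fun v _ => ?_)
  have hpow : (0 : ℝ) < 2 ^ Fintype.card ι := by positivity
  refine le_of_mul_le_mul_left ?_ hpow
  rw [← abs_of_pos hpow, ← abs_mul, abs_of_pos hpow, mul_sub, mul_div_cancel₀ _ hpow.ne']
  exact abs_two_pow_mul_card_signs_eq_sub_le hδ hδ0 v

end SignVectors

section IntegerLists

variable {R S : Type*} [CommRing R] [CommRing S]

/-- The value at `y` of the integer polynomial with coefficient list `l`, constant term first.
Lists are used because the kernel can compute with them. -/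
def listEval (y : R) (l : List ℤ) : R := l.foldr (fun (c : ℤ) s => (c : R) + y * s) 0

/-- The coefficient list of the sum of two integer polynomials. -/
def listAdd : List ℤ → List ℤ → List ℤ
  | [], m => m
  | l, [] => l
  | a :: l, b :: m => (a + b) :: listAdd l m

/-- The coefficient list of the product of two integer polynomials. -/
def listMul (l m : List ℤ) : List ℤ :=
  l.foldr (fun a s => listAdd (m.map (a * ·)) (0 :: s)) []

/-- The gcd of the coefficients of an integer polynomial. -/
def listContent (l : List ℤ) : ℕ := l.foldr (fun c g => c.natAbs.gcd g) 0

@[simp] lemma listEval_nil (y : R) : listEval y [] = 0 := rfl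

@[simp] lemma listEval_cons (y : R) (c : ℤ) (l : List ℤ) :
    listEval y (c :: l) = c + y * listEval y l := rfl

lemma map_listEval (φ : R →+* S) (y : R) (l : List ℤ) : φ (listEval y l) = listEval (φ y) l := by
  induction l with
  | nil => simp
  | cons c l ih => simp [ih]

@[simp] lemma listEval_listAdd (y : R) : ∀ l m : List ℤ,
    listEval y (listAdd l m) = listEval y l + listEval y m
  | [], m => by simp [listAdd]
  | a :: l, [] => by simp [listAdd]
  | a :: l, b :: m => by
    simp only [listAdd, listEval_cons, listEval_listAdd y l m]
    push_cast
    ring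

@[simp] lemma listEval_map_mul (y : R) (c : ℤ) (l : List ℤ) :
    listEval y (l.map (c * ·)) = c * listEval y l := by
  induction l with
  | nil => simp
  | cons a l ih =>
    simp only [List.map_cons, listEval_cons, ih]
    push_cast
    ring

@[simp] lemma listEval_listMul (y : R) (l m : List ℤ) :
    listEval y (listMul l m) = listEval y l * listEval y m := by
  induction l with
  | nil => simp [listMul]
  | cons a l ih =>
    rw [listMul, List.foldr_cons, ← listMul, listEval_listAdd, listEval_map_mul, listEval_cons, ih,
      listEval_cons]
    push_cast
    ring

lemma natDegree_listEval_X_le (l : List ℤ) : (listEval (X : R[X]) l).natDegree ≤ l.length := by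
  induction l with
  | nil => simp
  | cons c l ih =>
    rw [listEval_cons, ← C_eq_intCast]
    refine (natDegree_add_le _ _).trans (max_le (by simp) ?_)
    exact (natDegree_mul_le_of_le natDegree_X_le ih).trans (by simp [add_comm])

lemma intCast_eq_zero_of_listEval_X_eq_zero {l : List ℤ} (h : listEval (X : R[X]) l = 0) :
    ∀ c ∈ l, (c : R) = 0 := by
  induction l with
  | nil => simp
  | cons c l ih =>
    rw [listEval_cons, ← C_eq_intCast] at h
    have hc : (c : R) = 0 := by
      simpa only [coeff_add, coeff_C_zero, coeff_X_mul_zero, add_zero, coeff_zero]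
        using congrArg (coeff · 0) h
    have hl : listEval (X : R[X]) l = 0 := by
      ext n
      simpa only [coeff_add, coeff_C_succ, coeff_X_mul, zero_add, coeff_zero]
        using congrArg (coeff · (n + 1)) h
    exact List.forall_mem_cons.2 ⟨hc, ih hl⟩

lemma natCast_listContent_eq_zero {l : List ℤ} (h : ∀ c ∈ l, (c : R) = 0) :
    (listContent l : R) = 0 := by
  induction l with
  | nil => simp [listContent]
  | cons c l ih =>
    obtain ⟨hc, hl⟩ := List.forall_mem_cons.1 h
    have hbezout : (listContent (c :: l) : ℤ) = c * c.gcdA (listContent l) +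
        listContent l * c.gcdB (listContent l) := Int.gcd_eq_gcd_ab c (listContent l)
    have := congrArg (Int.cast : ℤ → R) hbezout
    push_cast at this
    simpa [hc, ih hl] using this

lemma card_listEval_eq_zero_le {F : Type*} [Field F] [Fintype F] (h2 : (2 : F) ≠ 0)
    {l : List ℤ} {n : ℕ} (hl : listContent l ∣ 2 ^ n) :
    (Finset.univ.filter fun y : F => listEval y l = 0).card ≤ l.length := by
  have hX : listEval (X : F[X]) l ≠ 0 := fun h => by
    obtain ⟨k, hk⟩ := hl
    have hcast := congrArg (Nat.cast : ℕ → F) hk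
    push_cast at hcast
    rw [natCast_listContent_eq_zero (intCast_eq_zero_of_listEval_X_eq_zero h), zero_mul] at hcast
    exact pow_ne_zero n h2 hcast
  have heval (y : F) : listEval y l = (listEval (X : F[X]) l).eval y := by
    rw [← coe_evalRingHom, map_listEval, coe_evalRingHom, eval_X]
  simp only [heval]
  exact (card_eval_eq_zero_le hX).trans (natDegree_listEval_X_le l)

end IntegerLists

section QuadraticPolynomials

variable {K : Type*} [Field K] {a b c a' b' c' : K}

lemma separable_quadratic (h : b ^ 2 - 4 * a * c ≠ 0) :
    (C a * X ^ 2 + C b * X + C c).Separable := by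
  set e := b ^ 2 - 4 * a * c
  refine ⟨C (-4 * a * e⁻¹), C (2 * a * e⁻¹) * X + C (b * e⁻¹), ?_⟩
  have he : C e⁻¹ * C (b ^ 2 - 4 * a * c) = 1 := by rw [← C_mul, inv_mul_cancel₀ h, C_1]
  rw [← he]
  simp only [derivative_add, derivative_mul, derivative_C, derivative_X, derivative_X_pow, C_mul,
    C_sub, C_pow, C_neg, C_ofNat, map_natCast]
  push_cast
  ring

lemma natDegree_quadratic_pos (h : b ^ 2 - 4 * a * c ≠ 0) :
    0 < (C a * X ^ 2 + C b * X + C c).natDegree := by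
  by_contra! hd
  have hcoeff (n : ℕ) (hn : n ≠ 0) : (C a * X ^ 2 + C b * X + C c).coeff n = 0 :=
    coeff_eq_zero_of_natDegree_lt (by omega)
  have ha : a = 0 := by simpa [coeff_X, coeff_C] using hcoeff 2 two_ne_zero
  have hb : b = 0 := by simpa [coeff_X, coeff_C] using hcoeff 1 one_ne_zero
  simp [ha, hb] at h

lemma isCoprime_linear (h : b * c' - b' * c ≠ 0) :
    IsCoprime (C b * X + C c) (C b' * X + C c') := by
  set e := b * c' - b' * c
  refine ⟨C (-b' * e⁻¹), C (b * e⁻¹), ?_⟩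
  have he : C e⁻¹ * C (b * c' - b' * c) = 1 := by rw [← C_mul, inv_mul_cancel₀ h, C_1]
  rw [← he]
  simp only [C_mul, C_sub, C_neg]
  ring

lemma isCoprime_quadratic
    (h : (a * c' - a' * c) ^ 2 - (a * b' - a' * b) * (b * c' - b' * c) ≠ 0) :
    IsCoprime (C a * X ^ 2 + C b * X + C c) (C a' * X ^ 2 + C b' * X + C c') := by
  set α := a * b' - a' * b with hα
  set β := a * c' - a' * c with hβ
  set e := β ^ 2 - α * (b * c' - b' * c) with he
  refine ⟨C e⁻¹ * (C α * (C a' * X + C b') - C β * C a'),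
    C e⁻¹ * (C β * C a - C α * (C a * X + C b)), ?_⟩
  have heinv : C e⁻¹ * C e = 1 := by rw [← C_mul, inv_mul_cancel₀ h, C_1]
  rw [← heinv, he, hα, hβ]
  simp only [C_mul, C_sub, C_pow]
  ring

end QuadraticPolynomials

section SignForms

/-- Indices of the seventeen polynomials in `x, y` whose square classes decide nonassociativity:
nine shared ones, and for each pair `(i, j)` of square classes two more, tagged `false` for the
one in entry `2` and `true` for the one in entry `3` of `solutionLine`. -/
abbrev SignIndex : Type := Fin 9 ⊕ (Bool × Bool) × Bool

/-- The seventeen polynomials whose square classes decide nonassociativity. -/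
def signForm {R : Type*} [CommRing R] (x y : R) : SignIndex → R
  | .inl k => ![x, y, 1 - x, 1 - y, x - y, x * y - x + y, x * y + x - y, x - y + 1, x - y - 1] k
  | .inr ((true, true), false) => x ^ 2 * y - x ^ 2 + x * y - y ^ 2
  | .inr ((true, false), false) => x + y ^ 2 - 2 * y
  | .inr ((false, true), false) => 2 * x * y - x - y ^ 2
  | .inr ((false, false), false) => x ^ 2 - x * y + y ^ 2 - y
  | .inr ((true, true), true) => x ^ 2 - x * y ^ 2 - x * y + y ^ 2
  | .inr ((true, false), true) => x ^ 2 - 2 * x * y + y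
  | .inr ((false, true), true) => x ^ 2 - 2 * x + y
  | .inr ((false, false), true) => x ^ 2 - x * y - x + y ^ 2

lemma map_signForm {R S : Type*} [CommRing R] [CommRing S] (φ : R →+* S) (x y : R)
    (k : SignIndex) : φ (signForm x y k) = signForm (φ x) (φ y) k := by
  obtain k | ⟨⟨_ | _, _ | _⟩, _ | _⟩ := k
  · fin_cases k <;> simp [signForm]
  all_goals simp [signForm, map_ofNat φ 2]

/-- The coefficients of a quadratic polynomial in `x` with coefficients in `ℤ[y]`. -/
structure QuadraticCoeffs where
  /-- The coefficient of `x ^ 2`. -/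
  a : List ℤ
  /-- The coefficient of `x`. -/
  b : List ℤ
  /-- The constant coefficient. -/
  c : List ℤ

/-- The forms `signForm x y k` as quadratic polynomials in `x`. -/
def signFormCoeffs : SignIndex → QuadraticCoeffs
  | .inl k => ![⟨[], [1], []⟩, ⟨[], [], [0, 1]⟩, ⟨[], [-1], [1]⟩, ⟨[], [], [1, -1]⟩,
      ⟨[], [1], [0, -1]⟩, ⟨[], [-1, 1], [0, 1]⟩, ⟨[], [1, 1], [0, -1]⟩, ⟨[], [1], [1, -1]⟩,
      ⟨[], [1], [-1, -1]⟩] k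
  | .inr ((true, true), false) => ⟨[-1, 1], [0, 1], [0, 0, -1]⟩
  | .inr ((true, false), false) => ⟨[], [1], [0, -2, 1]⟩
  | .inr ((false, true), false) => ⟨[], [-1, 2], [0, 0, -1]⟩
  | .inr ((false, false), false) => ⟨[1], [0, -1], [0, -1, 1]⟩
  | .inr ((true, true), true) => ⟨[1], [0, -1, -1], [0, 0, 1]⟩
  | .inr ((true, false), true) => ⟨[1], [0, -2], [0, 1]⟩
  | .inr ((false, true), true) => ⟨[1], [-2], [0, 1]⟩
  | .inr ((false, false), true) => ⟨[1], [-1, -1], [0, 0, 1]⟩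

lemma signForm_eq_quadratic {R : Type*} [CommRing R] (x y : R) (k : SignIndex) :
    signForm x y k = listEval y (signFormCoeffs k).a * x ^ 2 +
      listEval y (signFormCoeffs k).b * x + listEval y (signFormCoeffs k).c := by
  obtain k | ⟨⟨_ | _, _ | _⟩, _ | _⟩ := k
  · fin_cases k <;> simp [signForm, signFormCoeffs] <;> ring
  all_goals
    simp only [signForm, signFormCoeffs, listEval_cons, listEval_nil]
    push_cast
    ring

/-- The forms that depend on `x`; the others are `y` and `1 - y`. -/
def xForms : Finset SignIndex := {.inl 1, .inl 3}ᶜ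

/-- The difference `l * m - l' * m'` of products of integer polynomials. -/
def listMinor (l m l' m' : List ℤ) : List ℤ :=
  listAdd (listMul l m) (listMul [-1] (listMul l' m'))

lemma listEval_listMinor {R : Type*} [CommRing R] (y : R) (l m l' m' : List ℤ) :
    listEval y (listMinor l m l' m') =
      listEval y l * listEval y m - listEval y l' * listEval y m' := by
  simp [listMinor, sub_eq_add_neg]

/-- A polynomial in `y` that vanishes wherever two quadratic polynomials in `x` have a common
root: `b c' - b' c` for linear ones, and the resultant in general. -/
def eliminant (t t' : QuadraticCoeffs) : List ℤ :=
  if t.a = [] ∧ t'.a = [] then listMinor t.b t'.c t'.b t.c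
  else listMinor (listMinor t.a t'.c t'.a t.c) (listMinor t.a t'.c t'.a t.c)
    (listMinor t.a t'.b t'.a t.b) (listMinor t.b t'.c t'.b t.c)

/-- The polynomial in `y` whose nonvanishing guarantees that the forms `k` and `l` are coprime
polynomials in `x`, and, for `k = l`, that the form `k` is separable. -/
def obstruction (k l : SignIndex) : List ℤ :=
  if k = l then listMinor (signFormCoeffs k).b (signFormCoeffs k).b
    (listMul [4] (signFormCoeffs k).a) (signFormCoeffs k).c
  else eliminant (signFormCoeffs k) (signFormCoeffs l)

lemma listContent_obstruction_dvd :
    ∀ k ∈ xForms, ∀ l ∈ xForms, listContent (obstruction k l) ∣ 2 ^ 4 := by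
  decide +kernel

/-- The values of `y` for which the forms, as polynomials in `x`, are separable and pairwise
coprime. -/
def IsRegular {F : Type*} [Field F] (y : F) : Prop :=
  ∀ k ∈ xForms, ∀ l ∈ xForms, listEval y (obstruction k l) ≠ 0

/-- A bound for the number of values of `y` that are not regular. -/
def irregularBound : ℕ := ∑ kl ∈ xForms ×ˢ xForms, (obstruction kl.1 kl.2).length

lemma card_not_isRegular_le {F : Type*} [Field F] [Fintype F] (h2 : (2 : F) ≠ 0) :
    (Finset.univ.filter fun y : F => ¬IsRegular y).card ≤ irregularBound := by
  refine le_trans (Finset.card_le_card ?_) (Finset.card_biUnion_le.trans (Finset.sum_le_sum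
    fun kl hkl => card_listEval_eq_zero_le h2 (listContent_obstruction_dvd _
      (Finset.mem_product.1 hkl).1 _ (Finset.mem_product.1 hkl).2)))
  intro y hy
  have hy' : ¬IsRegular y := (Finset.mem_filter.1 hy).2
  unfold IsRegular at hy'
  push Not at hy'
  obtain ⟨k, hk, l, hl, h⟩ := hy'
  exact Finset.mem_biUnion.2 ⟨(k, l), Finset.mem_product.2 ⟨hk, hl⟩,
    Finset.mem_filter.2 ⟨Finset.mem_univ y, h⟩⟩

variable {F : Type*} [Field F] {y : F}

lemma signForm_X_C (y : F) (k : SignIndex) :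
    signForm (X : F[X]) (C y) k = C (listEval y (signFormCoeffs k).a) * X ^ 2 +
      C (listEval y (signFormCoeffs k).b) * X + C (listEval y (signFormCoeffs k).c) := by
  simp only [signForm_eq_quadratic, map_listEval]

lemma discrim_signForm_ne_zero (hy : IsRegular y) {k : SignIndex} (hk : k ∈ xForms) :
    listEval y (signFormCoeffs k).b ^ 2 -
      4 * listEval y (signFormCoeffs k).a * listEval y (signFormCoeffs k).c ≠ 0 := by
  simpa [obstruction, listEval_listMinor, ← sq] using hy k hk k hk

lemma isCoprime_signForm (hy : IsRegular y) {k l : SignIndex} (hk : k ∈ xForms)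
    (hl : l ∈ xForms) (hkl : k ≠ l) :
    IsCoprime (signForm (X : F[X]) (C y) k) (signForm X (C y) l) := by
  have h := hy k hk l hl
  rw [obstruction, if_neg hkl, eliminant] at h
  rw [signForm_X_C, signForm_X_C]
  split_ifs at h with ha
  · simpa [ha.1, ha.2] using isCoprime_linear (by simpa only [listEval_listMinor] using h)
  · exact isCoprime_quadratic (by simpa only [listEval_listMinor, ← sq] using h)

lemma notMem_xForms {k : SignIndex} : k ∉ xForms ↔ k = .inl 1 ∨ k = .inl 3 := by
  rw [xForms, Finset.mem_compl, not_not, Finset.mem_insert, Finset.mem_singleton]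

lemma signForm_eq_of_notMem_xForms (x x' : F) (y : F) {k : SignIndex} (hk : k ∉ xForms) :
    signForm x y k = signForm x' y k := by
  obtain rfl | rfl := notMem_xForms.1 hk <;> simp [signForm]

/-- `δ` bounds the quadratic character sums of the nonconstant squarefree polynomials of degree at
most `m`. -/
def CharSumBound (F : Type*) [Field F] [Fintype F] (m : ℕ) (δ : ℝ) : Prop :=
  ∀ f : F[X], Squarefree f → 0 < f.natDegree → f.natDegree ≤ m → |(charSum f : ℝ)| ≤ δ

variable [Fintype F] {δ : ℝ}

lemma abs_sum_prod_quadraticChar_eval_le {ι : Type*} {p : ι → F[X]} {S : Finset ι} {m : ℕ}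
    (hδ : CharSumBound F m δ) (hS : S.Nonempty) (hsep : ∀ k ∈ S, (p k).Separable)
    (hpos : ∀ k ∈ S, 0 < (p k).natDegree) (hdeg : ∑ k ∈ S, (p k).natDegree ≤ m)
    (hcop : (S : Set ι).Pairwise fun k l => IsCoprime (p k) (p l)) :
    |((∑ x, ∏ k ∈ S, quadraticChar F ((p k).eval x) : ℤ) : ℝ)| ≤ δ := by
  have hne : ∀ k ∈ S, p k ≠ 0 := fun k hk => (hsep k hk).ne_zero
  have hnat := natDegree_prod S p hne
  convert hδ (∏ k ∈ S, p k) ?_ (hnat ▸ Finset.sum_pos hpos hS) (hnat ▸ hdeg) using 3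
  · simp only [charSum, eval_prod, map_prod]
  · exact Finset.squarefree_prod_of_pairwise_isCoprime
      (fun k hk l hl hkl => (hcop hk hl hkl).isRelPrime) fun k hk => (hsep k hk).squarefree

lemma abs_prod_quadraticChar_le_one {ι : Type*} (S : Finset ι) (z : ι → F) :
    |((∏ k ∈ S, quadraticChar F (z k) : ℤ) : ℝ)| ≤ 1 := by
  rw [← map_prod, quadraticChar_apply, quadraticCharFun]
  split_ifs <;> simp

lemma abs_sum_prod_signForm_le_card (S : Finset SignIndex) (y : F) :
    |((∑ x, ∏ k ∈ S, quadraticChar F (signForm x y k) : ℤ) : ℝ)| ≤ Fintype.card F := by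
  push_cast
  refine (Finset.abs_sum_le_sum_abs _ _).trans ((Finset.sum_le_card_nsmul _ _ 1 fun x _ => ?_).trans
    (by simp))
  exact_mod_cast abs_prod_quadraticChar_le_one S fun k => signForm x y k

lemma abs_sum_fst_prod_signForm_le (hδ : CharSumBound F 34 δ) (hy : IsRegular y)
    {S : Finset SignIndex} (hS : (S.filter (· ∈ xForms)).Nonempty) :
    |((∑ x, ∏ k ∈ S, quadraticChar F (signForm x y k) : ℤ) : ℝ)| ≤ δ := by
  have hmem {k : SignIndex} (hk : k ∈ S.filter (· ∈ xForms)) : k ∈ xForms :=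
    (Finset.mem_filter.1 hk).2
  have hdeg (k : SignIndex) : (signForm X (C y) k).natDegree ≤ 2 :=
    signForm_X_C y k ▸ natDegree_quadratic_le
  have hcard : (S.filter (· ∈ xForms)).card ≤ 17 := Finset.card_le_univ _
  have hxForms := abs_sum_prod_quadraticChar_eval_le (p := signForm X (C y)) hδ hS
    (fun k hk => signForm_X_C y k ▸ separable_quadratic (discrim_signForm_ne_zero hy (hmem hk)))
    (fun k hk => signForm_X_C y k ▸ natDegree_quadratic_pos
      (discrim_signForm_ne_zero hy (hmem hk)))
    ((Finset.sum_le_card_nsmul _ _ 2 fun k _ => hdeg k).trans (by rw [smul_eq_mul]; omega))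
    fun k hk l hl hkl => isCoprime_signForm hy (hmem hk) (hmem hl) hkl
  have hsplit (x : F) : ∏ k ∈ S, quadraticChar F (signForm x y k) =
      (∏ k ∈ S.filter (· ∉ xForms), quadraticChar F (signForm 0 y k)) *
        ∏ k ∈ S.filter (· ∈ xForms), quadraticChar F ((signForm X (C y) k).eval x) := by
    rw [← Finset.prod_filter_not_mul_prod_filter S (· ∈ xForms)]
    congr 1
    · exact Finset.prod_congr rfl fun k hk => by
        rw [signForm_eq_of_notMem_xForms x 0 y (Finset.mem_filter.1 hk).2]
    · exact Finset.prod_congr rfl fun k _ => by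
        rw [← coe_evalRingHom, map_signForm, coe_evalRingHom, eval_X, eval_C]
  rw [Finset.sum_congr rfl fun x _ => hsplit x, ← Finset.mul_sum, Int.cast_mul, abs_mul]
  exact (mul_le_of_le_one_left (abs_nonneg _) (abs_prod_quadraticChar_le_one _ _)).trans hxForms

lemma abs_sum_snd_prod_signForm_le (hδ : CharSumBound F 34 δ) (x : F) {S : Finset SignIndex}
    (hS : S.Nonempty) (hSx : ∀ k ∈ S, k ∉ xForms) :
    |((∑ y, ∏ k ∈ S, quadraticChar F (signForm x y k) : ℤ) : ℝ)| ≤ δ := by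
  have hk {k : SignIndex} (hk : k ∈ S) : k = .inl 1 ∨ k = .inl 3 := notMem_xForms.1 (hSx k hk)
  have h1 : signForm (C x) X (.inl 1) = X := by simp [signForm]
  have h3 : signForm (C x) X (.inl 3) = 1 - X := by simp [signForm]
  have hdeg : ∀ k ∈ S, (signForm (C x) X k).natDegree = 1 := fun k hkS => by
    obtain rfl | rfl := hk hkS
    · rw [h1, natDegree_X]
    · rw [h3, ← neg_sub, natDegree_neg, ← C_1, natDegree_X_sub_C]
  have hcop : IsCoprime (X : F[X]) (1 - X) := ⟨1, 1, by ring⟩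
  have hsum := abs_sum_prod_quadraticChar_eval_le (p := signForm (C x) X) hδ hS
    (fun k hkS => by
      obtain rfl | rfl := hk hkS
      · rw [h1]
        exact separable_X
      · rw [h3, ← neg_sub, ← C_1, ← neg_one_mul]
        exact (separable_X_sub_C (x := (1 : F))).unit_mul isUnit_one.neg)
    (fun k hkS => hdeg k hkS ▸ one_pos)
    (by
      rw [Finset.sum_congr rfl hdeg, Finset.sum_const, smul_eq_mul, mul_one]
      exact (Finset.card_le_univ S).trans (by decide))
    fun k hkS l hlS hkl => by
      obtain rfl | rfl := hk hkS <;> obtain rfl | rfl := hk hlS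
      · exact absurd rfl hkl
      · simpa only [h1, h3] using hcop
      · simpa only [h1, h3] using hcop.symm
      · exact absurd rfl hkl
  convert hsum using 7 with y _ k
  rw [← coe_evalRingHom, map_signForm, coe_evalRingHom, eval_X, eval_C]

lemma abs_sum_prod_signForm_le (hδ : CharSumBound F 34 δ) (hδ0 : 0 ≤ δ) (h2 : (2 : F) ≠ 0)
    {S : Finset SignIndex} (hS : S.Nonempty) :
    |((∑ p : F × F, ∏ k ∈ S, quadraticChar F (signForm p.1 p.2 k) : ℤ) : ℝ)| ≤
      (δ + irregularBound) * Fintype.card F := by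
  by_cases hSx : (S.filter (· ∈ xForms)).Nonempty
  · have hterm (y : F) : |((∑ x, ∏ k ∈ S, quadraticChar F (signForm x y k) : ℤ) : ℝ)| ≤
        δ + (if ¬IsRegular y then (Fintype.card F : ℝ) else 0) := by
      split_ifs with hy
      · simpa using abs_sum_fst_prod_signForm_le hδ hy hSx
      · exact (abs_sum_prod_signForm_le_card S y).trans (le_add_of_nonneg_left hδ0)
    rw [Fintype.sum_prod_type_right, Int.cast_sum]
    refine ((Finset.abs_sum_le_sum_abs _ _).trans (Finset.sum_le_sum fun y _ => hterm y)).trans ?_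
    rw [Finset.sum_add_distrib, ← Finset.sum_filter, Finset.sum_const, Finset.sum_const,
      nsmul_eq_mul, nsmul_eq_mul, Finset.card_univ, add_mul, mul_comm δ]
    gcongr
    exact card_not_isRegular_le h2
  · rw [Finset.not_nonempty_iff_eq_empty, Finset.filter_eq_empty_iff] at hSx
    rw [Fintype.sum_prod_type, Int.cast_sum]
    refine ((Finset.abs_sum_le_sum_abs _ _).trans (Finset.sum_le_card_nsmul _ _ δ fun x _ =>
      abs_sum_snd_prod_signForm_le hδ x hS fun k => @hSx k)).trans ?_
    rw [nsmul_eq_mul, Finset.card_univ, mul_comm]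
    gcongr
    exact le_add_of_nonneg_right (Nat.cast_nonneg _)

lemma card_signForm_fst_eq_zero_le (hy : IsRegular y) {k : SignIndex} (hk : k ∈ xForms) :
    (Finset.univ.filter fun x : F => signForm x y k = 0).card ≤ 2 := by
  have hne := signForm_X_C y k ▸
    (separable_quadratic (discrim_signForm_ne_zero hy hk)).ne_zero
  have heval (x : F) : signForm x y k = (signForm X (C y) k).eval x := by
    rw [← coe_evalRingHom, map_signForm, coe_evalRingHom, eval_X, eval_C]
  simp only [heval]
  exact (card_eval_eq_zero_le hne).trans (signForm_X_C y k ▸ natDegree_quadratic_le)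

lemma card_signForm_eq_zero_le (h2 : (2 : F) ≠ 0) (k : SignIndex) :
    (Finset.univ.filter fun p : F × F => signForm p.1 p.2 k = 0).card ≤
      (2 + irregularBound) * Fintype.card F := by
  by_cases hk : k ∈ xForms
  · have hterm (y : F) : (Finset.univ.filter fun x => signForm x y k = 0).card ≤
        2 + if ¬IsRegular y then Fintype.card F else 0 := by
      split_ifs with hy
      · exact card_signForm_fst_eq_zero_le hy hk
      · exact (Finset.card_le_univ _).trans (Nat.le_add_left _ _)
    calc (Finset.univ.filter fun p : F × F => signForm p.1 p.2 k = 0).card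
        = ∑ y, (Finset.univ.filter fun x => signForm x y k = 0).card := by
          simp only [Finset.card_filter, Fintype.sum_prod_type_right]
      _ ≤ ∑ y, (2 + if ¬IsRegular y then Fintype.card F else 0) :=
          Finset.sum_le_sum fun y _ => hterm y
      _ = (2 + (Finset.univ.filter fun y : F => ¬IsRegular y).card) * Fintype.card F := by
          rw [Finset.sum_add_distrib, ← Finset.sum_filter, Finset.sum_const, Finset.sum_const,
            smul_eq_mul, smul_eq_mul, Finset.card_univ]
          ring
      _ ≤ (2 + irregularBound) * Fintype.card F := by gcongr; exact card_not_isRegular_le h2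
  · have hterm (x : F) : (Finset.univ.filter fun y => signForm x y k = 0).card ≤ 1 := by
      refine Finset.card_le_one.2 fun y hy z hz => ?_
      replace hy := (Finset.mem_filter.1 hy).2
      replace hz := (Finset.mem_filter.1 hz).2
      obtain rfl | rfl := notMem_xForms.1 hk
      · exact Eq.trans (by simpa [signForm] using hy) (by simpa [signForm] using hz.symm)
      · exact sub_right_injective (hy.trans hz.symm)
    calc (Finset.univ.filter fun p : F × F => signForm p.1 p.2 k = 0).card
        = ∑ x, (Finset.univ.filter fun y => signForm x y k = 0).card := by
          simp only [Finset.card_filter, Fintype.sum_prod_type]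
      _ ≤ 1 * Fintype.card F :=
          (Finset.sum_le_card_nsmul _ _ 1 fun x _ => hterm x).trans (by simp)
      _ ≤ (2 + irregularBound) * Fintype.card F := by gcongr; omega

lemma card_exists_signForm_eq_zero_le (h2 : (2 : F) ≠ 0) :
    (Finset.univ.filter fun p : F × F => ∃ k, signForm p.1 p.2 k = 0).card ≤
      17 * ((2 + irregularBound) * Fintype.card F) := by
  have hsub : (Finset.univ.filter fun p : F × F => ∃ k, signForm p.1 p.2 k = 0) ⊆
      Finset.univ.biUnion fun k => Finset.univ.filter fun p : F × F => signForm p.1 p.2 k = 0 := by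
    intro p hp
    obtain ⟨k, hk⟩ := (Finset.mem_filter.1 hp).2
    exact Finset.mem_biUnion.2 ⟨k, Finset.mem_univ k, Finset.mem_filter.2 ⟨Finset.mem_univ p, hk⟩⟩
  exact (Finset.card_le_card hsub).trans
    (Finset.card_biUnion_le_card_mul _ _ _ fun k _ => card_signForm_eq_zero_le h2 k)

end SignForms

section Reduction

variable {F : Type*} [Field F]

/-- The slope of the operation of `Q_{a,b}` on the square class `i`. -/
def slope (a b : F) (i : Bool) : F := if i then a else b

lemma qop_eq_add_slope_mul (a b u v : F) :
    qop a b u v = u + slope a b (squareClass (v - u)) * (v - u) := by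
  by_cases h : IsSquare (v - u) <;> simp [qop, slope, squareClass, h]

lemma qop_add_left (a b u v w : F) : qop a b (u + v) (u + w) = u + qop a b v w := by
  simp only [qop_eq_add_slope_mul, add_sub_add_left_eq_sub, add_assoc]

lemma maxNA_iff_forall_qop_zero (a b : F) : MaxNA a b ↔ ∀ X Y : F,
    qop a b (qop a b 0 X) (X + Y) = qop a b 0 (X + qop a b 0 Y) → X = 0 ∧ Y = 0 := by
  have htranslate (u X Y : F) :
      qop a b (qop a b u (u + X)) (u + (X + Y)) = qop a b u (qop a b (u + X) (u + (X + Y))) ↔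
        qop a b (qop a b 0 X) (X + Y) = qop a b 0 (X + qop a b 0 Y) := by
    have hu (w : F) : qop a b u (u + w) = u + qop a b 0 w := by
      simpa using qop_add_left a b u 0 w
    have hX : qop a b X (X + Y) = X + qop a b 0 Y := by simpa using qop_add_left a b X 0 Y
    rw [hu, qop_add_left, qop_add_left, hX, hu, add_right_inj]
  refine ⟨fun h X Y hXY => ?_, fun h u v w huvw => ?_⟩
  · obtain ⟨h0, h1⟩ := h 0 X (X + Y) (by simpa using (htranslate 0 X Y).2 hXY)
    exact ⟨h0.symm, left_eq_add.1 h1⟩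
  · obtain ⟨h0, h1⟩ := h (v - u) (w - v) ((htranslate u _ _).1 (by simpa using huvw))
    exact ⟨(sub_eq_zero.1 h0).symm, (sub_eq_zero.1 h1).symm⟩

/-- If `X`, `Y`, `X + 0 * Y` and `X + Y - 0 * X` have square classes `i`, `j`, `r`, `s`, then
`(0 * X) * (X + Y) = 0 * (X * (X + Y))` is a linear equation in `X` and `Y`. This vector lists the
values of these four expressions at a direction vector of its line of solutions. -/
def solutionLine (a b : F) (i j r s : Bool) : Fin 4 → F :=
  let c := slope a b
  let X := c r * c j - c s
  let Y := c i + c s * (1 - c i) - c r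
  ![X, Y, X + c j * Y, (1 - c i) * X + Y]

lemma qop_zero_eq_iff {a b X Y : F} {i j r s : Bool} (hi : squareClass X = i)
    (hj : squareClass Y = j) (hr : squareClass (X + slope a b j * Y) = r)
    (hs : squareClass ((1 - slope a b i) * X + Y) = s) :
    qop a b (qop a b 0 X) (X + Y) = qop a b 0 (X + qop a b 0 Y) ↔
      solutionLine a b i j r s 1 * X = solutionLine a b i j r s 0 * Y := by
  have hs' : X + Y - slope a b i * X = (1 - slope a b i) * X + Y := by ring
  simp only [qop_eq_add_slope_mul, sub_zero, zero_add, hi, hj, hr, hs', hs, solutionLine,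
    Matrix.cons_val_zero, Matrix.cons_val_one]
  constructor <;> intro h <;> linear_combination h

lemma maxNA_iff {a b : F} (h0 : ∀ i j r s, solutionLine a b i j r s 0 ≠ 0) :
    MaxNA a b ↔ ∀ i j r s, ∀ z : F, z ≠ 0 →
      (fun m => squareClass (z * solutionLine a b i j r s m)) ≠ ![i, j, r, s] := by
  have hthird (z : F) (i j r s : Bool) : z * solutionLine a b i j r s 0 +
      slope a b j * (z * solutionLine a b i j r s 1) = z * solutionLine a b i j r s 2 := by
    simp only [solutionLine, Matrix.cons_val]; ring
  have hfourth (z : F) (i j r s : Bool) : (1 - slope a b i) * (z * solutionLine a b i j r s 0) +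
      z * solutionLine a b i j r s 1 = z * solutionLine a b i j r s 3 := by
    simp only [solutionLine, Matrix.cons_val]; ring
  rw [maxNA_iff_forall_qop_zero]
  constructor
  · intro h i j r s z hz hclass
    have hassoc := (qop_zero_eq_iff (i := i) (j := j) (r := r) (s := s) (congrFun hclass 0)
      (congrFun hclass 1) (hthird z i j r s ▸ congrFun hclass 2)
      (hfourth z i j r s ▸ congrFun hclass 3)).2 (by ring)
    exact mul_ne_zero hz (h0 i j r s) (h _ _ hassoc).1
  · intro h X Y hXY
    by_contra hne
    obtain ⟨i, hi⟩ : ∃ i, squareClass X = i := ⟨_, rfl⟩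
    obtain ⟨j, hj⟩ : ∃ j, squareClass Y = j := ⟨_, rfl⟩
    obtain ⟨r, hr⟩ : ∃ r, squareClass (X + slope a b j * Y) = r := ⟨_, rfl⟩
    obtain ⟨s, hs⟩ : ∃ s, squareClass ((1 - slope a b i) * X + Y) = s := ⟨_, rfl⟩
    rw [qop_zero_eq_iff hi hj hr hs] at hXY
    obtain ⟨z, rfl⟩ : ∃ z, X = z * solutionLine a b i j r s 0 :=
      ⟨_, (div_mul_cancel₀ X (h0 i j r s)).symm⟩
    obtain rfl : Y = z * solutionLine a b i j r s 1 :=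
      mul_left_cancel₀ (h0 i j r s) (by linear_combination -hXY)
    rw [hthird] at hr
    rw [hfourth] at hs
    refine h i j r s z (fun hz => hne (by simp [hz])) (funext fun m => ?_)
    fin_cases m
    exacts [hi, hj, hr, hs]

/-- A monomial up to sign: whether the sign is negative, and the list of factors. -/
abbrev SignedMonomial (κ : Type*) : Type _ := Bool × List κ

/-- The value of a signed monomial when the factors are evaluated by `f`. -/
def SignedMonomial.value {κ : Type*} (f : κ → F) (e : SignedMonomial κ) : F :=
  (if e.1 then -1 else 1) * (e.2.map f).prod

/-- The square class of a signed monomial with factors of square classes `w`, if `-1` is not a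
square. -/
def SignedMonomial.signClass {κ : Type*} (w : κ → Bool) (e : SignedMonomial κ) : Bool :=
  e.2.foldr (fun k b => w k == b) !e.1

/-- The entry `0` of `lineFactors`. -/
def firstFactors : Bool → Bool → Bool → SignedMonomial (Fin 9 ⊕ Bool)
  | true, true, true => (false, [.inl 4, .inl 0, .inl 1])
  | true, true, false => (false, [.inl 4, .inl 5])
  | true, false, true => (false, [.inl 4, .inl 0])
  | true, false, false => (false, [.inl 4, .inl 1])
  | false, true, true => (false, [.inl 4, .inl 0])
  | false, true, false => (false, [.inl 4, .inl 1])
  | false, false, true => (false, [.inl 4, .inl 7])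
  | false, false, false => (false, [.inl 4])

/-- The entry `1` of `lineFactors`. -/
def secondFactors : Bool → Bool → Bool → SignedMonomial (Fin 9 ⊕ Bool)
  | true, true, true => (true, [.inl 4, .inl 0, .inl 1])
  | true, true, false => (true, [.inl 4, .inl 1])
  | true, false, true => (true, [.inl 4, .inl 6])
  | true, false, false => (true, [.inl 4, .inl 0])
  | false, true, true => (true, [.inl 4, .inl 1])
  | false, true, false => (false, [.inl 4, .inl 8])
  | false, false, true => (true, [.inl 4, .inl 0])
  | false, false, false => (true, [.inl 4])

/-- The entry `2` of `lineFactors`. -/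
def thirdFactors : Bool → Bool → Bool → SignedMonomial (Fin 9 ⊕ Bool)
  | true, true, true => (true, [.inl 0, .inl 1, .inl 1, .inl 2])
  | true, true, false => (false, [.inr false])
  | true, false, true => (false, [.inl 0, .inr false])
  | true, false, false => (true, [.inl 1, .inl 2])
  | false, true, true => (true, [.inl 0, .inl 1, .inl 2])
  | false, true, false => (false, [.inr false])
  | false, false, true => (false, [.inr false])
  | false, false, false => (true, [.inl 2])

/-- The entry `3` of `lineFactors`. -/
def fourthFactors : Bool → Bool → Bool → SignedMonomial (Fin 9 ⊕ Bool)
  | true, true, true => (true, [.inl 0, .inl 1, .inl 0, .inl 3])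
  | true, true, false => (true, [.inr true])
  | true, false, true => (true, [.inl 0, .inl 1, .inl 3])
  | true, false, false => (true, [.inr true])
  | false, true, true => (false, [.inl 1, .inr true])
  | false, true, false => (true, [.inl 0, .inl 3])
  | false, false, true => (false, [.inr true])
  | false, false, false => (true, [.inl 3])

/-- Up to a common factor, the entries of `solutionLine a b i j r s` for
`a = x(1-y)/(x-y)` and `b = (1-y)/(x-y)`, as monomials in the shared forms `inl k` and the two
forms `inr t` of the pair `(i, j)`. -/
def lineFactors (i j r s : Bool) : Fin 4 → SignedMonomial (Fin 9 ⊕ Bool) :=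
  ![firstFactors j r s, secondFactors i r s, thirdFactors i j s, fourthFactors i j r]

/-- The index of a local factor of `lineFactors i j r s` among all forms. -/
def localIndex (i j : Bool) : Fin 9 ⊕ Bool → SignIndex := Sum.map id (Prod.mk (i, j))

lemma solutionLine_eq {x y : F} (hxy : x - y ≠ 0) (i j r s : Bool) (m : Fin 4) :
    solutionLine (x * (1 - y) / (x - y)) ((1 - y) / (x - y)) i j r s m =
      (1 - x) * (1 - y) / (x - y) ^ 3 *
        (lineFactors i j r s m).value fun k => signForm x y (localIndex i j k) := by
  have hslope (i : Bool) : slope (x * (1 - y) / (x - y)) ((1 - y) / (x - y)) i =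
      (1 - y) * slope x 1 i / (x - y) := by
    cases i <;> simp [slope, mul_comm]
  rw [div_mul_eq_mul_div, eq_div_iff (pow_ne_zero 3 hxy)]
  fin_cases m <;>
    simp only [solutionLine, hslope, lineFactors, SignedMonomial.value, Fin.zero_eta, Fin.mk_one,
      Fin.reduceFinMk, Matrix.cons_val] <;>
    field_simp
  · cases j <;> cases r <;> cases s <;> simp [slope, firstFactors, localIndex, signForm] <;> ring
  · cases i <;> cases r <;> cases s <;> simp [slope, secondFactors, localIndex, signForm] <;> ring
  · cases i <;> cases j <;> cases r <;> cases s <;>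
      simp [slope, thirdFactors, localIndex, signForm] <;> ring
  · cases i <;> cases j <;> cases r <;> cases s <;>
      simp [slope, fourthFactors, localIndex, signForm] <;> ring

lemma SignedMonomial.value_ne_zero {κ : Type*} {f : κ → F} (hf : ∀ k, f k ≠ 0)
    (e : SignedMonomial κ) : e.value f ≠ 0 := by
  refine mul_ne_zero (by split_ifs <;> simp) (List.prod_ne_zero fun h => ?_)
  obtain ⟨k, -, hk⟩ := List.mem_map.1 h
  exact hf k hk

variable [Finite F]

lemma squareClass_value (hneg : ¬IsSquare (-1 : F)) {κ : Type*} {f : κ → F} (hf : ∀ k, f k ≠ 0)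
    (e : SignedMonomial κ) : squareClass (e.value f) = e.signClass fun k => squareClass (f k) := by
  obtain ⟨n, l⟩ := e
  induction l with
  | nil => cases n <;> simp [SignedMonomial.value, SignedMonomial.signClass, squareClass, hneg]
  | cons k l ih =>
    have hvalue : SignedMonomial.value f (n, k :: l) = f k * SignedMonomial.value f (n, l) := by
      simp only [SignedMonomial.value, List.map_cons, List.prod_cons]
      ring
    rw [hvalue, squareClass_mul (hf k) (SignedMonomial.value_ne_zero hf _), ih]
    rfl

/-- Whether, for square classes `w` of the factors, no nonzero point of a line
`solutionLine a b i j r s` has entries of square classes `i`, `j`, `r`, `s`. Scaling a point by a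
nonsquare flips all four classes, whence the quantifier over `t`. -/
def Avoids (w : Fin 9 ⊕ Bool → Bool) (i j : Bool) : Prop :=
  ∀ r s t, (fun m => t == (lineFactors i j r s m).signClass w) ≠ ![i, j, r, s]

lemma maxNA_iff_avoids (hneg : ¬IsSquare (-1 : F)) {x y : F} (h : ∀ k, signForm x y k ≠ 0) :
    MaxNA (x * (1 - y) / (x - y)) ((1 - y) / (x - y)) ↔
      ∀ i j, Avoids (fun k => squareClass (signForm x y (localIndex i j k))) i j := by
  have hxy : x - y ≠ 0 := by simpa [signForm] using h (.inl 4)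
  have hx : 1 - x ≠ 0 := by simpa [signForm] using h (.inl 2)
  have hy : 1 - y ≠ 0 := by simpa [signForm] using h (.inl 3)
  set c := (1 - x) * (1 - y) / (x - y) ^ 3
  have hc : c ≠ 0 := div_ne_zero (mul_ne_zero hx hy) (pow_ne_zero 3 hxy)
  have hvalue (i j r s : Bool) (m : Fin 4) :
      ((lineFactors i j r s m).value fun k => signForm x y (localIndex i j k)) ≠ 0 :=
    SignedMonomial.value_ne_zero (fun k => h _) _
  have hclass {z : F} (hz : z ≠ 0) (i j r s : Bool) (m : Fin 4) :
      squareClass (z * solutionLine (x * (1 - y) / (x - y)) ((1 - y) / (x - y)) i j r s m) =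
        (squareClass (z * c) == (lineFactors i j r s m).signClass
          fun k => squareClass (signForm x y (localIndex i j k))) := by
    rw [solutionLine_eq hxy, ← mul_assoc, squareClass_mul (mul_ne_zero hz hc) (hvalue i j r s m),
      squareClass_value hneg fun k => h _]
  have hsurj (t : Bool) : ∃ z : F, z ≠ 0 ∧ squareClass (z * c) = t := by
    cases t
    · exact ⟨-1 / c, div_ne_zero (neg_ne_zero.2 one_ne_zero) hc, by
        simpa [div_mul_cancel₀ _ hc, squareClass] using hneg⟩
    · exact ⟨c⁻¹, inv_ne_zero hc, by simp [inv_mul_cancel₀ hc, squareClass]⟩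
  rw [maxNA_iff fun i j r s => by
    rw [solutionLine_eq hxy]
    exact mul_ne_zero hc (hvalue i j r s 0)]
  refine forall₂_congr fun i j => forall₂_congr fun r s => ⟨fun H t => ?_, fun H z hz => ?_⟩
  · obtain ⟨z, hz, rfl⟩ := hsurj t
    simpa only [hclass hz] using H z hz
  · simpa only [hclass hz] using H (squareClass (z * c))

end Reduction

section Count

instance (w : Fin 9 ⊕ Bool → Bool) (i j : Bool) : Decidable (Avoids w i j) := by
  unfold Avoids
  infer_instance

/-- The sign vectors of the forms at which `x` and `y` are squares and `Q_{a,b}` is maximally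
nonassociative. -/
def favourableSigns : Finset (SignIndex → Bool) :=
  Finset.univ.filter fun w => (w (.inl 0) = true ∧ w (.inl 1) = true) ∧
    ∀ i j, Avoids (w ∘ localIndex i j) i j

lemma comp_localIndex (w : SignIndex → Bool) (i j : Bool) :
    w ∘ localIndex i j = Sum.elim (w ∘ Sum.inl) fun t => w (.inr ((i, j), t)) := by
  funext k
  cases k <;> rfl

lemma mem_favourableSigns {w : SignIndex → Bool} : w ∈ favourableSigns ↔
    (w (.inl 0) = true ∧ w (.inl 1) = true) ∧ ∀ i j, Avoids (w ∘ localIndex i j) i j := by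
  simp only [favourableSigns, Finset.mem_filter, Finset.mem_univ, true_and]

/-- Once the classes of the shared forms are fixed, the conditions for the four pairs `(i, j)` are
independent. -/
lemma card_favourableSigns_eq_sum : favourableSigns.card =
    ∑ w : Fin 9 → Bool with w 0 = true ∧ w 1 = true, ∏ ij : Bool × Bool,
      (Finset.univ.filter fun u : Bool → Bool => Avoids (Sum.elim w u) ij.1 ij.2).card := by
  simp only [← Fintype.card_piFinset, ← Finset.card_sigma]
  refine Finset.card_equiv ⟨fun w => ⟨w ∘ Sum.inl, fun ij t => w (.inr (ij, t))⟩,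
    fun p => Sum.elim p.1 fun l => p.2 l.1 l.2, Sum.elim_comp_inl_inr, fun _ => rfl⟩ fun w => ?_
  simp only [Finset.mem_sigma, Finset.mem_filter, Finset.mem_univ, true_and,
    Fintype.mem_piFinset, mem_favourableSigns, comp_localIndex, Prod.forall]
  exact Iff.rfl

lemma card_favourableSigns : favourableSigns.card = 1650 := by
  rw [card_favourableSigns_eq_sum]
  decide +kernel

end Count

section Parameters

variable {F : Type*} [Field F]

/-- The pair `(a, b)` with `x = a / b` and `y = (1 - a) / (1 - b)`. -/
def parameters (p : F × F) : F × F := (p.1 * (1 - p.2) / (p.1 - p.2), (1 - p.2) / (p.1 - p.2))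

/-- The pairs `(x, y)` of distinct squares different from `0` and `1`, which parametrize `Σ(F)`. -/
def squarePairs (F : Type*) [Field F] : Set (F × F) :=
  {p | (IsSquare p.1 ∧ IsSquare p.2) ∧
    p.1 ≠ 0 ∧ p.1 ≠ 1 ∧ p.2 ≠ 0 ∧ p.2 ≠ 1 ∧ p.1 ≠ p.2}

lemma mapsTo_parameters : Set.MapsTo parameters (squarePairs F) (SigSet F) := by
  rintro ⟨x, y⟩ ⟨⟨hx, hy⟩, hx0, hx1, hy0, hy1, hxy⟩
  have hd : x - y ≠ 0 := sub_ne_zero.2 hxy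
  set b := (1 - y) / (x - y) with hb
  have ha : x * (1 - y) / (x - y) = x * b := mul_div_assoc ..
  have h1b : 1 - b = (x - 1) / (x - y) := by rw [hb]; field_simp; ring
  have h1a : 1 - x * b = y * (1 - b) := by rw [hb]; field_simp; ring
  have hb0 : b ≠ 0 := div_ne_zero (sub_ne_zero.2 hy1.symm) hd
  have hb1 : 1 - b ≠ 0 := h1b ▸ div_ne_zero (sub_ne_zero.2 hx1) hd
  have ha1 : 1 - x * b ≠ 0 := h1a ▸ mul_ne_zero hy0 hb1
  simp only [SigSet, parameters, Set.mem_ofPred_eq, ← hb, ha]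
  refine ⟨fun h => hx1 (mul_right_cancel₀ hb0 (h.trans (one_mul b).symm)), mul_ne_zero hx0 hb0,
    (sub_ne_zero.1 ha1).symm, hb0, (sub_ne_zero.1 hb1).symm, ?_, ?_⟩
  · exact mul_assoc x b b ▸ hx.mul (.mul_self b)
  · rw [h1a, mul_assoc]
    exact hy.mul (.mul_self _)

lemma parameters_div_div {a b : F} (hab : a ≠ b) (hb0 : b ≠ 0) (hb1 : b ≠ 1) :
    parameters (a / b, (1 - a) / (1 - b)) = (a, b) := by
  have hd : a - b ≠ 0 := sub_ne_zero.2 hab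
  have h1b : 1 - b ≠ 0 := sub_ne_zero.2 hb1.symm
  have hxy : a / b - (1 - a) / (1 - b) = (a - b) / (b * (1 - b)) := by field_simp; ring
  have h1y : 1 - (1 - a) / (1 - b) = (a - b) / (1 - b) := by field_simp; ring
  simp only [parameters, hxy, h1y, Prod.mk.injEq]
  constructor <;> field_simp

lemma mapsTo_div_div :
    Set.MapsTo (fun p : F × F => (p.1 / p.2, (1 - p.1) / (1 - p.2))) (SigSet F)
      (squarePairs F) := by
  have isSquare_div {z w : F} (hw : w ≠ 0) (h : IsSquare (z * w)) : IsSquare (z / w) := by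
    simpa [mul_div_mul_right, hw] using h.div (.mul_self w)
  rintro ⟨a, b⟩ ⟨hab, ha0, ha1, hb0, hb1, hsq, hsq'⟩
  have h1a : 1 - a ≠ 0 := sub_ne_zero.2 ha1.symm
  have h1b : 1 - b ≠ 0 := sub_ne_zero.2 hb1.symm
  refine ⟨⟨isSquare_div hb0 hsq, isSquare_div h1b hsq'⟩, div_ne_zero ha0 hb0, ?_,
    div_ne_zero h1a h1b, ?_, ?_⟩
  · simpa [div_eq_one_iff_eq hb0] using hab
  · simpa [div_eq_one_iff_eq h1b] using hab
  · simp only [ne_eq, div_eq_div_iff hb0 h1b]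
    exact fun h => hab (by linear_combination h)

lemma bijOn_parameters : Set.BijOn parameters (squarePairs F) (SigSet F) := by
  refine Set.InvOn.bijOn ⟨?_, ?_⟩ mapsTo_parameters mapsTo_div_div
  · rintro ⟨x, y⟩ ⟨-, -, hx1, -, hy1, hxy⟩
    have hd : x - y ≠ 0 := sub_ne_zero.2 hxy
    have hx : x - 1 ≠ 0 := sub_ne_zero.2 hx1
    have hy : 1 - y ≠ 0 := sub_ne_zero.2 hy1.symm
    have h1a : 1 - x * (1 - y) / (x - y) = y * (x - 1) / (x - y) := by field_simp; ring
    have h1b : 1 - (1 - y) / (x - y) = (x - 1) / (x - y) := by field_simp; ring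
    simp only [parameters, h1a, h1b, Prod.mk.injEq]
    constructor <;> field_simp
  · rintro ⟨a, b⟩ ⟨hab, -, -, hb0, hb1, -⟩
    exact parameters_div_div hab hb0 hb1

lemma squareClass_signForm_mem_favourableSigns_iff [Finite F] (hneg : ¬IsSquare (-1 : F))
    {p : F × F} (h : ∀ k, signForm p.1 p.2 k ≠ 0) :
    (fun k => squareClass (signForm p.1 p.2 k)) ∈ favourableSigns ↔
      p ∈ squarePairs F ∧ MaxNA (parameters p).1 (parameters p).2 := by
  have hx0 : p.1 ≠ 0 := h (.inl 0)
  have hy0 : p.2 ≠ 0 := h (.inl 1)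
  have hx1 : p.1 ≠ 1 := (sub_ne_zero.1 (h (.inl 2))).symm
  have hy1 : p.2 ≠ 1 := (sub_ne_zero.1 (h (.inl 3))).symm
  have hxy : p.1 ≠ p.2 := sub_ne_zero.1 (h (.inl 4))
  rw [mem_favourableSigns]
  refine and_congr ?_ (maxNA_iff_avoids hneg h).symm
  simp [squarePairs, squareClass_eq_true_iff, signForm, hx0, hy0, hx1, hy1, hxy]

variable [Fintype F]

lemma sigmaCount_eq_card : sigmaCount F = (Finset.univ.filter fun p : F × F =>
    p ∈ squarePairs F ∧ MaxNA (parameters p).1 (parameters p).2).card := by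
  have himage : {p : F × F | p ∈ SigSet F ∧ MaxNA p.1 p.2} =
      parameters '' (squarePairs F ∩ parameters ⁻¹' {p | MaxNA p.1 p.2}) := by
    rw [Set.image_inter_preimage, bijOn_parameters.image_eq]
    rfl
  rw [sigmaCount, himage,
    (bijOn_parameters.injOn.mono Set.inter_subset_left).ncard_image,
    ← Set.ncard_coe_finset]
  congr 1
  ext p
  simp

lemma abs_sigmaCount_sub_card_le (hneg : ¬IsSquare (-1 : F)) :
    |(sigmaCount F : ℝ) - (Finset.univ.filter fun p : F × F => (∀ k, signForm p.1 p.2 k ≠ 0) ∧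
        (fun k => squareClass (signForm p.1 p.2 k)) ∈ favourableSigns).card| ≤
      (Finset.univ.filter fun p : F × F => ∃ k, signForm p.1 p.2 k = 0).card := by
  set good := Finset.univ.filter fun p : F × F =>
    p ∈ squarePairs F ∧ MaxNA (parameters p).1 (parameters p).2
  set degenerate := Finset.univ.filter fun p : F × F => ∃ k, signForm p.1 p.2 k = 0
  have hsdiff : (Finset.univ.filter fun p : F × F => (∀ k, signForm p.1 p.2 k ≠ 0) ∧
      (fun k => squareClass (signForm p.1 p.2 k)) ∈ favourableSigns) = good \ degenerate := by
    ext p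
    simp only [good, degenerate, Finset.mem_filter, Finset.mem_univ, true_and, Finset.mem_sdiff,
      not_exists]
    rw [and_comm]
    exact and_congr_left fun h => squareClass_signForm_mem_favourableSigns_iff hneg h
  rw [hsdiff, sigmaCount_eq_card, abs_of_nonneg (sub_nonneg.2 (by
    exact_mod_cast Finset.card_le_card Finset.sdiff_subset)), sub_le_iff_le_add']
  have := Finset.card_le_card_sdiff_add_card (s := good) (t := degenerate)
  exact_mod_cast this

lemma abs_sigmaCount_sub_le {δ : ℝ} (hδ : CharSumBound F 34 δ) (hδ0 : 0 ≤ δ) (h2 : (2 : F) ≠ 0)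
    (hneg : ¬IsSquare (-1 : F)) :
    |(sigmaCount F : ℝ) - 825 / 2 ^ 16 * (Fintype.card F : ℝ) ^ 2| ≤
      (1650 * δ + 1650 * irregularBound + 1651 * (17 * (2 + irregularBound))) *
        Fintype.card F := by
  have hzero : ((Finset.univ.filter fun p : F × F => ∃ k, signForm p.1 p.2 k = 0).card : ℝ) ≤
      17 * ((2 + irregularBound) * Fintype.card F) := by
    exact_mod_cast card_exists_signForm_eq_zero_le h2
  have hfavourable := abs_card_signs_mem_sub_le
    (f := fun k (p : F × F) => signForm p.1 p.2 k)
    (fun S hS => abs_sum_prod_signForm_le hδ hδ0 h2 hS) (by positivity) favourableSigns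
  have hindex : Fintype.card SignIndex = 17 := rfl
  rw [card_favourableSigns, hindex, Fintype.card_prod] at hfavourable
  refine (abs_sub_le _ _ _).trans ((add_le_add ((abs_sigmaCount_sub_card_le hneg).trans hzero)
    (le_trans (le_of_eq ?_) hfavourable)).trans ?_)
  · push_cast
    congr 1
    ring
  · push_cast
    linarith

end Parameters

end MaxNonassoc

/-- As `q` runs through prime powers with `q ≡ 3 (mod 4)`, `σ(q)/q²` converges
to `825·2⁻¹⁶`. -/
theorem sigma_ratio_tendsto_three_mod_four :
    ∀ ε : ℝ, 0 < ε → ∃ N : ℕ,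
      ∀ (q : ℕ) (F : Type) [Field F] [Fintype F],
        Fintype.card F = q → q % 4 = 3 → q > N →
        |(sigmaCount F : ℝ) / (q : ℝ) ^ 2 - 825 / 2 ^ 16| < ε := by
  intro ε hε
  set C : ℝ := 1650 * MaxNonassoc.irregularBound + 1651 * (17 * (2 + MaxNonassoc.irregularBound))
  obtain ⟨N, hN⟩ := MaxNonassoc.exists_forall_abs_charSum_le 34 (ε := ε / 3300) (by positivity)
  obtain ⟨M, hM⟩ := exists_nat_gt (C / (ε / 2))
  refine ⟨max N M, fun q F _ _ hcard hmod hq => ?_⟩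
  subst hcard
  obtain ⟨hqN, hqM⟩ := max_lt_iff.1 hq
  have hneg : ¬IsSquare (-1 : F) := fun h => FiniteField.isSquare_neg_one_iff.1 h hmod
  have h2 : (2 : F) ≠ 0 := Ring.two_ne_zero
    (MaxNonassoc.ringChar_ne_two_of_card_odd (by omega))
  have hbound := MaxNonassoc.abs_sigmaCount_sub_le (hN F hqN (by omega)) (by positivity) h2 hneg
  set Q : ℝ := (Fintype.card F : ℝ)
  have hQ : 0 < Q := Nat.cast_pos.2 Fintype.card_pos
  have hCQ : C < ε / 2 * Q :=
    (div_lt_iff₀' (by positivity)).1 (hM.trans (Nat.cast_lt.2 hqM))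
  rw [div_sub' (pow_ne_zero 2 hQ.ne'), abs_div, abs_of_pos (by positivity : 0 < Q ^ 2),
    div_lt_iff₀ (by positivity), mul_comm (Q ^ 2)]
  calc _ ≤ _ := hbound
    _ < ε / 2 * Q * Q + ε / 2 * Q * Q := by nlinarith
    _ = ε * Q ^ 2 := by ring
end
end
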